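/- arXiv:1512.08267 — 2 statements merged into one kernel-verified Lean document; each statement's English description precedes it below -/
import Mathlib

section
/- For each ε > 0 there exists a constant c(ε) such that the following holds. Let P be a set of m distinct points and C a set of n distinct circles in ℝ³, and assume that every algebraic surface in ℝ³ of degree at most c(ε) contains at most q₂ circles of C. Then I(P,C) ≤ α·(m^{3/7+ε}·n^{6/7} + m^{3/5+ε}·n^{3/5}·q₂^{1/5} + m + n), where α is a constant depending only on ε. -/
attribute [local instance] Classical.propDecidable

noncomputable section

/-- The number of incidences between a finite set of points and a finite set of
curves (subsets of `ℝ^d`): the number of pairs `(p, γ)` with `p ∈ γ`. -/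
def Incidences {d : ℕ} (P : Finset (Fin d → ℝ)) (C : Finset (Set (Fin d → ℝ))) : ℕ :=
  ((P ×ˢ C).filter fun pc => pc.1 ∈ pc.2).card

/-- A line in `ℝ^d`. -/
def IsLine {d : ℕ} (ℓ : Set (Fin d → ℝ)) : Prop :=
  ∃ a b : Fin d → ℝ, b ≠ 0 ∧ ℓ = {x | ∃ t : ℝ, x = a + t • b}

/-- The real zero set of a polynomial in `d` variables. -/
def zeroSet {d : ℕ} (f : MvPolynomial (Fin d) ℝ) : Set (Fin d → ℝ) :=
  {x | MvPolynomial.eval x f = 0}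

/-- A real algebraic set in `ℝ^d`. -/
def IsAlgSet {d : ℕ} (V : Set (Fin d → ℝ)) : Prop :=
  ∃ S : Set (MvPolynomial (Fin d) ℝ),
    V = {x | ∀ f ∈ S, MvPolynomial.eval x f = 0}

/-- A real algebraic set in `ℝ^d` cut out by polynomials of degree at most `E`. -/
def IsAlgSetDeg {d : ℕ} (E : ℕ) (V : Set (Fin d → ℝ)) : Prop :=
  ∃ S : Set (MvPolynomial (Fin d) ℝ), (∀ f ∈ S, f.totalDegree ≤ E) ∧
    V = {x | ∀ f ∈ S, MvPolynomial.eval x f = 0}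

/-- An irreducible real algebraic set: a nonempty algebraic set that is not the
union of two proper algebraic subsets. -/
def IsIrredAlgSet {d : ℕ} (V : Set (Fin d → ℝ)) : Prop :=
  IsAlgSet V ∧ V.Nonempty ∧
    ∀ V₁ V₂ : Set (Fin d → ℝ), IsAlgSet V₁ → IsAlgSet V₂ → V = V₁ ∪ V₂ →
      V = V₁ ∨ V = V₂

/-- The real algebraic set `V` has dimension at least `j`: there is a strictly
increasing chain of `j+1` irreducible algebraic sets contained in `V`. -/
def AlgDimGE {d : ℕ} (j : ℕ) (V : Set (Fin d → ℝ)) : Prop :=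
  ∃ W : Fin (j + 1) → Set (Fin d → ℝ),
    (∀ i, IsIrredAlgSet (W i)) ∧
    (∀ i i' : Fin (j + 1), i < i' → W i ⊂ W i') ∧
    W (Fin.last j) ⊆ V

/-- The real algebraic set `V` has dimension exactly `j`. -/
def HasAlgDim {d : ℕ} (j : ℕ) (V : Set (Fin d → ℝ)) : Prop :=
  AlgDimGE j V ∧ ¬ AlgDimGE (j + 1) V

/-- An irreducible algebraic curve of degree at most `E` in `ℝ^d`: an irreducible
real algebraic set of dimension one, cut out by polynomials of degree at most `E`. -/
def IsIrredCurve {d : ℕ} (E : ℕ) (γ : Set (Fin d → ℝ)) : Prop :=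
  IsAlgSetDeg E γ ∧ IsIrredAlgSet γ ∧ HasAlgDim 1 γ

/-- A finite family `C` of curves has `k` degrees of freedom with multiplicity `s`:
(i) for every `k` distinct points, at most `s` curves of `C` pass through all of
them, and (ii) any two distinct curves of `C` intersect in at most `s` points. -/
def HasDegreesOfFreedom {d : ℕ} (C : Finset (Set (Fin d → ℝ))) (k s : ℕ) : Prop :=
  (∀ pts : Finset (Fin d → ℝ), pts.card = k →
      (C.filter fun γ => ∀ p ∈ pts, p ∈ γ).card ≤ s) ∧
  ∀ γ₁ ∈ C, ∀ γ₂ ∈ C, γ₁ ≠ γ₂ → (γ₁ ∩ γ₂).Finite ∧ (γ₁ ∩ γ₂).ncard ≤ s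

/-- A circle in `ℝ³`: the intersection of a sphere of positive radius with a plane
through its center. -/
def IsCircle (γ : Set (Fin 3 → ℝ)) : Prop :=
  ∃ (c v : Fin 3 → ℝ) (ρ : ℝ), 0 < ρ ∧ v ≠ 0 ∧
    γ = {x | (∑ i, (x i - c i) ^ 2) = ρ ^ 2 ∧ (∑ i, v i * (x i - c i)) = 0}

/-!
The proof is by polynomial partitioning. Iterated ham sandwich cuts by polynomials produce, for each
`t = 2 ^ M`, a nonzero polynomial of degree `O(t)` in `k` variables whose sign cells, `t ^ k` in
number, contain at most a `t ^ (-k)` proportion of the points each. A circle not contained in the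
zero set meets it in `O(t)` points, hence meets `O(t)` cells. Applying the bound inductively in the
cells and summing by Hölder's inequality loses a constant factor that `t ^ (-(k * ε))` absorbs once
`t` is large; when there are too many circles for the induction to work, the Kővári–Sós–Turán bound
suffices.

What remains are the circles contained in the zero set of the partitioning polynomial. By hypothesis
there are at most `q₂` of them, and their incidences are bounded by the planar estimate
`m ^ (3 / 5 + ε) * n ^ (4 / 5) + m + n`. That estimate is proved by the same recursion with `k = 2`,
the cells being preimages under a linear map to the plane. For a generic such map the images of
distinct circles are distinct ellipses, each the zero set of a prime polynomial, so that a nonzero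
polynomial of degree `D` in the plane vanishes on at most `D` of them.

The ham sandwich theorem is obtained algebraically. A system of `n` real equations in `n` unknowns
with leading forms `X_i ^ d`, `d` odd, has a quotient algebra of odd dimension `d ^ n`; the residue
fields being `ℝ` or `ℂ`, one of them is `ℝ`, so the system has a real solution. Perturbing and
passing to the limit, `n` real forms of odd degree `d` in `n + 1` variables have a common nontrivial
zero; approximating the sign function by odd polynomials then gives the ham sandwich cut.
-/

/-! ### Real points of algebras of odd dimension -/

theorem even_finrank_of_isFiniteLength {A : Type*} [CommRing A] [Algebra ℝ A]
    (hA : IsEmpty (A →ₐ[ℝ] ℝ)) {M : Type*} [AddCommGroup M] [Module A M]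
    (hM : IsFiniteLength A M) [hℝ : Module ℝ M] [htower : IsScalarTower ℝ A M]
    [hfin : FiniteDimensional ℝ M] :
    Even (Module.finrank ℝ M) := by
  induction hM generalizing hℝ htower hfin with
  | of_subsingleton =>
    rw [Module.finrank_zero_of_subsingleton]
    exact Even.zero
  | @of_simple_quotient M _ _ N hsimple _ ih =>
    have hN : Even (Module.finrank ℝ (N.restrictScalars ℝ)) := by
      have : FiniteDimensional ℝ N := inferInstanceAs (FiniteDimensional ℝ (N.restrictScalars ℝ))
      exact ih
    obtain ⟨m, hm, ⟨e⟩⟩ := isSimpleModule_iff_quot_maximal.mp hsimple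
    let _ : Field (A ⧸ m) := Ideal.Quotient.field m
    let e' : (M ⧸ N.restrictScalars ℝ) ≃ₗ[ℝ] A ⧸ m :=
      Submodule.Quotient.restrictScalarsEquiv ℝ N ≪≫ₗ e.restrictScalars ℝ
    have : FiniteDimensional ℝ (A ⧸ m) := e'.finiteDimensional
    have hquot : Module.finrank ℝ (A ⧸ m) = 2 := by
      rcases Real.nonempty_algEquiv_or (A ⧸ m) with ⟨⟨f⟩⟩ | ⟨⟨f⟩⟩
      · exact (hA.false (f.toAlgHom.comp (Ideal.Quotient.mkₐ ℝ m))).elim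
      · rw [f.toLinearEquiv.finrank_eq, Complex.finrank_real_complex]
    rw [← Submodule.finrank_quotient_add_finrank (N.restrictScalars ℝ), e'.finrank_eq, hquot]
    exact even_two.add hN

theorem nonempty_algHom_real_of_odd_finrank {A : Type*} [CommRing A] [Algebra ℝ A]
    (h : Odd (Module.finrank ℝ A)) : Nonempty (A →ₐ[ℝ] ℝ) := by
  by_contra hA
  have : FiniteDimensional ℝ A := Module.finite_of_finrank_pos h.pos
  have : IsNoetherian A A := isNoetherian_of_tower ℝ inferInstance
  have : IsArtinian A A := isArtinian_of_tower ℝ inferInstance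
  exact Nat.not_even_iff_odd.mpr h (even_finrank_of_isFiniteLength (not_nonempty_iff.mp hA)
    (isFiniteLength_iff_isNoetherian_isArtinian.mpr ⟨inferInstance, inferInstance⟩))

/-! ### Systems of polynomial equations of odd degree -/

section AdicMonomial

variable {σ R S : Type*} [Fintype σ] [CommRing R] [CommRing S]

/-- The product `∏ X_i ^ (b_i mod d) * g_i ^ (b_i div d)`. When the leading form of `g_i` is
`X_i ^ d`, these products have the same leading forms as the monomials `X ^ b`. -/
def adicMonomial (d : ℕ) (g : σ → MvPolynomial σ R) (b : σ →₀ ℕ) : MvPolynomial σ R :=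
  ∏ i, (MvPolynomial.X i ^ (b i % d) * g i ^ (b i / d))

theorem map_adicMonomial (φ : R →+* S) (d : ℕ) (g : σ → MvPolynomial σ R) (b : σ →₀ ℕ) :
    MvPolynomial.map φ (adicMonomial d g b) =
      adicMonomial d (fun i => MvPolynomial.map φ (g i)) b := by
  simp [adicMonomial]

theorem totalDegree_adicMonomial_le {d : ℕ} {g : σ → MvPolynomial σ R}
    (hg : ∀ i, (g i).totalDegree ≤ d) (b : σ →₀ ℕ) :
    (adicMonomial d g b).totalDegree ≤ b.degree := by
  rw [Finsupp.degree_eq_sum]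
  refine (MvPolynomial.totalDegree_finsetProd _ _).trans (Finset.sum_le_sum fun i _ => ?_)
  have hX : (MvPolynomial.X i ^ (b i % d) : MvPolynomial σ R).totalDegree ≤ b i % d := by
    rw [MvPolynomial.X_pow_eq_monomial]
    exact (MvPolynomial.totalDegree_monomial_le _ _).trans_eq (by simp)
  calc _ ≤ b i % d + b i / d * d := (MvPolynomial.totalDegree_mul _ _).trans
        (add_le_add hX ((MvPolynomial.totalDegree_pow _ _).trans (Nat.mul_le_mul_left _ (hg i))))
    _ = b i := Nat.mod_add_div' (b i) d

theorem adicMonomial_X_pow (d : ℕ) (b : σ →₀ ℕ) :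
    adicMonomial d (fun i => (MvPolynomial.X i ^ d : MvPolynomial σ R)) b =
      MvPolynomial.monomial b 1 := by
  rw [MvPolynomial.monomial_eq, adicMonomial, Finsupp.prod_fintype _ _ (by simp), map_one, one_mul]
  refine Finset.prod_congr rfl fun i _ => ?_
  rw [← pow_mul, ← pow_add, Nat.mod_add_div]

theorem adicMonomial_mul {d : ℕ} (hd : 0 < d) (g : σ → MvPolynomial σ R) (b : σ →₀ ℕ) (i : σ) :
    adicMonomial d g b * g i = adicMonomial d g (b + Finsupp.single i d) := by
  have hoff : ∏ j ∈ Finset.univ.erase i, (MvPolynomial.X j ^ ((b + Finsupp.single i d) j % d) *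
        g j ^ ((b + Finsupp.single i d) j / d)) =
      ∏ j ∈ Finset.univ.erase i, (MvPolynomial.X j ^ (b j % d) * g j ^ (b j / d)) := by
    refine Finset.prod_congr rfl fun j hj => ?_
    rw [Finsupp.add_apply, Finsupp.single_eq_of_ne (Finset.ne_of_mem_erase hj), add_zero]
  rw [adicMonomial, adicMonomial, ← Finset.mul_prod_erase _ _ (Finset.mem_univ i),
    ← Finset.mul_prod_erase (a := i) _ _ (Finset.mem_univ i), hoff, Finsupp.add_apply,
    Finsupp.single_eq_same, Nat.add_mod_right, Nat.add_div_right _ hd]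
  ring

theorem adicMonomial_mem_span {d : ℕ} (hd : 0 < d) (g : σ → MvPolynomial σ R) {b : σ →₀ ℕ} {i : σ}
    (hi : d ≤ b i) : adicMonomial d g b ∈ Ideal.span (Set.range g) := by
  have hb : b = (b - Finsupp.single i d) + Finsupp.single i d :=
    (tsub_add_cancel_of_le (Finsupp.single_le_iff.mpr hi)).symm
  rw [hb, ← adicMonomial_mul hd]
  exact Ideal.mul_mem_left _ _ (Ideal.subset_span ⟨i, rfl⟩)

end AdicMonomial

section AdicBasis

variable {σ K : Type*} [Fintype σ] [Field K]

theorem mem_span_range_iff_repr_eq_zero {d : ℕ} (hd : 0 < d) {g : σ → MvPolynomial σ K}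
    (B : Module.Basis (σ →₀ ℕ) K (MvPolynomial σ K)) (hB : ∀ e, B e = adicMonomial d g e)
    (p : MvPolynomial σ K) :
    p ∈ Ideal.span (Set.range g) ↔ ∀ e, (∀ i, e i < d) → B.repr p e = 0 := by
  constructor
  · have hmul (c : MvPolynomial σ K) (i : σ) (e : σ →₀ ℕ) (he : e i < d) :
        B.repr (c * g i) e = 0 := by
      have hzero : B.coord e ∘ₗ LinearMap.mulRight K (g i) = 0 := B.ext fun b => by
        rw [LinearMap.comp_apply, LinearMap.mulRight_apply, hB, adicMonomial_mul hd, ← hB,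
          B.coord_apply, B.repr_self, Finsupp.single_eq_of_ne, LinearMap.zero_apply]
        rintro rfl
        simp at he
      exact LinearMap.congr_fun hzero c
    intro hp e he
    obtain ⟨c, rfl⟩ := Ideal.mem_span_range_iff_exists_fun.mp hp
    rw [map_sum, Finsupp.finsetSum_apply]
    exact Finset.sum_eq_zero fun i _ => hmul (c i) i e (he i)
  · intro hp
    rw [← B.linearCombination_repr p, Finsupp.linearCombination_apply]
    refine Submodule.sum_mem _ fun e he => ?_
    obtain ⟨i, hi⟩ : ∃ i, d ≤ e i := by
      by_contra! hlt
      exact Finsupp.mem_support_iff.mp he (hp e hlt)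
    change B.repr p e • B e ∈ _
    rw [hB]
    exact Submodule.smul_of_tower_mem _ _ (adicMonomial_mem_span hd g hi)

theorem card_reducedExponent (d : ℕ) :
    Nat.card {e : σ →₀ ℕ // ∀ i, e i < d} = d ^ Fintype.card σ := by
  have e : {e : σ →₀ ℕ // ∀ i, e i < d} ≃ (σ → Fin d) :=
    (Finsupp.equivFunOnFinite.subtypeEquiv fun _ => Iff.rfl).trans
      (Equiv.subtypePiEquivPi.trans (Equiv.piCongrRight fun _ => Fin.equivSubtype.symm))
  rw [Nat.card_congr e]
  simp

theorem finrank_quotient_span_range {d : ℕ} (hd : 0 < d) {g : σ → MvPolynomial σ K}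
    (B : Module.Basis (σ →₀ ℕ) K (MvPolynomial σ K)) (hB : ∀ e, B e = adicMonomial d g e) :
    Module.finrank K (MvPolynomial σ K ⧸ Ideal.span (Set.range g)) = d ^ Fintype.card σ := by
  let reduced : Set (σ →₀ ℕ) := {e | ∀ i, e i < d}
  let φ : MvPolynomial σ K →ₗ[K] reduced →₀ K :=
    Finsupp.lsubtypeDomain reduced ∘ₗ B.repr.toLinearMap
  have hφ : Function.Surjective φ := fun w =>
    ⟨B.repr.symm w.extendDomain, by simp [φ, Finsupp.lsubtypeDomain_apply]⟩
  have hker : (Ideal.span (Set.range g)).restrictScalars K = LinearMap.ker φ := by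
    ext p
    rw [Submodule.restrictScalars_mem, mem_span_range_iff_repr_eq_zero hd B hB, LinearMap.mem_ker]
    simp [φ, Finsupp.ext_iff, reduced, Finsupp.lsubtypeDomain_apply]
  have e := (Submodule.Quotient.restrictScalarsEquiv K (Ideal.span (Set.range g))).symm ≪≫ₗ
    Submodule.quotEquivOfEq _ _ hker ≪≫ₗ φ.quotKerEquivOfSurjective hφ
  rw [e.finrank_eq, Module.finrank_eq_nat_card_basis Finsupp.basisSingleOne]
  exact card_reducedExponent d

end AdicBasis

theorem exists_eval_eq_zero_of_basis {σ : Type*} [Fintype σ] {d : ℕ} (hd : Odd d)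
    {g : σ → MvPolynomial σ ℝ} (B : Module.Basis (σ →₀ ℕ) ℝ (MvPolynomial σ ℝ))
    (hB : ∀ e, B e = adicMonomial d g e) : ∃ x : σ → ℝ, ∀ i, MvPolynomial.eval x (g i) = 0 := by
  have hodd : Odd (Module.finrank ℝ (MvPolynomial σ ℝ ⧸ Ideal.span (Set.range g))) := by
    rw [finrank_quotient_span_range hd.pos B hB]
    exact hd.pow
  obtain ⟨ψ⟩ := nonempty_algHom_real_of_odd_finrank hodd
  let χ : MvPolynomial σ ℝ →ₐ[ℝ] ℝ := ψ.comp (Ideal.Quotient.mkₐ ℝ _)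
  refine ⟨fun i => χ (MvPolynomial.X i), fun i => ?_⟩
  have hχ : χ (g i) = 0 := by
    have : Ideal.Quotient.mk (Ideal.span (Set.range g)) (g i) = 0 :=
      Ideal.Quotient.eq_zero_iff_mem.mpr (Ideal.subset_span ⟨i, rfl⟩)
    simp [χ, this]
  rwa [MvPolynomial.aeval_unique χ, MvPolynomial.aeval_eq_eval] at hχ

/-- The exponents of total degree at most `k`, as a finite index type for coefficient matrices. -/
abbrev ExponentLE (σ : Type*) (k : ℕ) : Type _ := {b : σ →₀ ℕ // b.degree ≤ k}

instance (σ : Type*) [Finite σ] (k : ℕ) : Fintype (ExponentLE σ k) :=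
  (Finsupp.finite_of_degree_le k).fintype

/-- The matrix whose column `b` lists the coefficients of degree at most `k` of `B b`. -/
def coeffMatrix {σ R : Type*} [CommRing R] (B : (σ →₀ ℕ) → MvPolynomial σ R) (k : ℕ) :
    Matrix (ExponentLE σ k) (ExponentLE σ k) R :=
  Matrix.of fun a b => MvPolynomial.coeff a.1 (B b.1)

section CoeffMatrix

variable {σ R S K : Type*} [CommRing R] [CommRing S] [Field K]

theorem coeffMatrix_map (φ : R →+* S) (B : (σ →₀ ℕ) → MvPolynomial σ R) (k : ℕ) :
    coeffMatrix (fun b => MvPolynomial.map φ (B b)) k = (coeffMatrix B k).map φ := by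
  ext a b
  simp [coeffMatrix, MvPolynomial.coeff_map]

theorem coeffMatrix_monomial (k : ℕ) :
    coeffMatrix (fun b : σ →₀ ℕ => MvPolynomial.monomial b (1 : R)) k = 1 := by
  ext a b
  simp only [coeffMatrix, Matrix.of_apply, MvPolynomial.coeff_monomial, Matrix.one_apply,
    Subtype.ext_iff, eq_comm]

theorem linearIndependent_of_det_coeffMatrix_ne_zero [Finite σ] {B : (σ →₀ ℕ) → MvPolynomial σ K}
    (hdet : ∀ k, (coeffMatrix B k).det ≠ 0) : LinearIndependent K B := by
  refine linearIndependent_iff_finset_linearIndependent.mpr fun s => ?_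
  let k := s.sup Finsupp.degree
  let coeffs : MvPolynomial σ K →ₗ[K] ExponentLE σ k → K :=
    LinearMap.pi fun a => MvPolynomial.lcoeff K a.1
  have hcols : LinearIndependent K (fun b : ExponentLE σ k => B b.1) :=
    LinearIndependent.of_comp coeffs (Matrix.linearIndependent_cols_of_det_ne_zero (hdet k))
  exact hcols.comp (fun b : s => ⟨b.1, Finset.le_sup (f := Finsupp.degree) b.2⟩)
    fun b c h => Subtype.ext (congrArg (fun e : ExponentLE σ k => e.1) h)

theorem span_range_eq_top_of_det_coeffMatrix_ne_zero [Finite σ] {B : (σ →₀ ℕ) → MvPolynomial σ K}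
    (hB : ∀ b, (B b).totalDegree ≤ b.degree) (hdet : ∀ k, (coeffMatrix B k).det ≠ 0) :
    ⊤ ≤ Submodule.span K (Set.range B) := by
  intro p _
  let k := p.totalDegree
  obtain ⟨v, hv⟩ : ∃ v, (coeffMatrix B k).mulVec v = fun a => MvPolynomial.coeff a.1 p :=
    Matrix.mulVec_surjective_iff_isUnit.mpr
      ((Matrix.isUnit_iff_isUnit_det _).mpr (isUnit_iff_ne_zero.mpr (hdet k))) _
  have hp : p = ∑ b : ExponentLE σ k, v b • B b.1 := by
    ext a
    by_cases ha : a.degree ≤ k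
    · refine (congrFun hv ⟨a, ha⟩).symm.trans ?_
      simp [coeffMatrix, Matrix.mulVec, dotProduct, MvPolynomial.coeff_sum, mul_comm]
    · have hdeg : (∑ b : ExponentLE σ k, v b • B b.1).totalDegree ≤ k :=
        MvPolynomial.totalDegree_finsetSum_le fun b _ =>
          (MvPolynomial.totalDegree_smul_le _ _).trans ((hB _).trans b.2)
      have hlt : k < ∑ i ∈ a.support, a i := by simpa [Finsupp.degree_apply] using ha
      rw [MvPolynomial.coeff_eq_zero_of_totalDegree_lt hlt,
        MvPolynomial.coeff_eq_zero_of_totalDegree_lt (hdeg.trans_lt hlt)]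
  rw [hp]
  exact Submodule.sum_mem _ fun b _ => Submodule.smul_mem _ _ (Submodule.subset_span ⟨b.1, rfl⟩)

end CoeffMatrix

section PerturbedSystem

variable {σ : Type*} [Fintype σ] {d : ℕ}

theorem exists_eval_eq_zero_of_det_coeffMatrix_ne_zero (hd : Odd d) {g : σ → MvPolynomial σ ℝ}
    (hg : ∀ i, (g i).totalDegree ≤ d) (hdet : ∀ k, (coeffMatrix (adicMonomial d g) k).det ≠ 0) :
    ∃ x : σ → ℝ, ∀ i, MvPolynomial.eval x (g i) = 0 :=
  exists_eval_eq_zero_of_basis hd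
    (Module.Basis.mk (linearIndependent_of_det_coeffMatrix_ne_zero hdet)
      (span_range_eq_top_of_det_coeffMatrix_ne_zero (totalDegree_adicMonomial_le hg) hdet))
    fun e => Module.Basis.mk_apply _ _ e

theorem countable_setOf_det_coeffMatrix_eq_zero (f : σ → MvPolynomial σ ℝ) (k : ℕ) :
    {s : ℝ | (coeffMatrix (adicMonomial d fun i =>
      MvPolynomial.X i ^ d + MvPolynomial.C s * f i) k).det = 0}.Countable := by
  let G : σ → MvPolynomial σ (Polynomial ℝ) := fun i =>
    MvPolynomial.X i ^ d + MvPolynomial.C Polynomial.X * MvPolynomial.map Polynomial.C (f i)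
  let D : Polynomial ℝ := (coeffMatrix (adicMonomial d G) k).det
  have hD (s : ℝ) : (coeffMatrix (adicMonomial d fun i =>
      MvPolynomial.X i ^ d + MvPolynomial.C s * f i) k).det = D.eval s := by
    have hcomp : (Polynomial.evalRingHom s).comp Polynomial.C = RingHom.id ℝ := by
      ext
      simp
    have hG (i : σ) : MvPolynomial.map (Polynomial.evalRingHom s) (G i) =
        MvPolynomial.X i ^ d + MvPolynomial.C s * f i := by
      simp [G, MvPolynomial.map_map, hcomp, MvPolynomial.map_id]
    simp only [← hG]
    rw [funext fun b => (map_adicMonomial (Polynomial.evalRingHom s) d G b).symm, coeffMatrix_map]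
    exact (RingHom.map_det (Polynomial.evalRingHom s) _).symm
  have hD0 : D ≠ 0 := by
    intro h
    have h0 := hD 0
    simp only [map_zero, zero_mul, add_zero] at h0
    rw [h, Polynomial.eval_zero, funext (adicMonomial_X_pow d), coeffMatrix_monomial,
      Matrix.det_one] at h0
    exact one_ne_zero h0
  simp_rw [hD]
  exact (Polynomial.finite_setOfPred_isRoot hD0).countable

end PerturbedSystem

theorem exists_abs_eval_le_mul_abs_pow {σ : Type*} [Finite σ] {d : ℕ} (hd : Odd d)
    {f : σ → MvPolynomial σ ℝ} (hf : ∀ i, (f i).totalDegree ≤ d) {δ : ℝ} (hδ : 0 < δ) :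
    ∃ x : σ → ℝ, ∀ i, |MvPolynomial.eval x (f i)| ≤ δ * |x i| ^ d := by
  cases nonempty_fintype σ
  obtain ⟨s, hs, hδs⟩ := ((Set.countable_iUnion fun k =>
    countable_setOf_det_coeffMatrix_eq_zero (d := d) f k).dense_compl ℝ).exists_gt δ⁻¹
  simp only [Set.mem_compl_iff, Set.mem_iUnion, not_exists] at hs
  have hs0 : 0 < s := (inv_pos.mpr hδ).trans hδs
  have hdeg (i : σ) : (MvPolynomial.X i ^ d + MvPolynomial.C s * f i).totalDegree ≤ d := by
    refine (MvPolynomial.totalDegree_add _ _).trans (max_le ?_ ?_)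
    · rw [MvPolynomial.totalDegree_X_pow]
    · refine (MvPolynomial.totalDegree_mul _ _).trans ?_
      rw [MvPolynomial.totalDegree_C, zero_add]
      exact hf i
  obtain ⟨x, hx⟩ := exists_eval_eq_zero_of_det_coeffMatrix_ne_zero hd hdeg hs
  refine ⟨x, fun i => ?_⟩
  have hxi : x i ^ d + s * MvPolynomial.eval x (f i) = 0 := by simpa using hx i
  have habs : s * |MvPolynomial.eval x (f i)| = |x i| ^ d := by
    nth_rw 1 [← abs_of_pos hs0]
    rw [← abs_mul, ← abs_pow, eq_neg_of_add_eq_zero_left hxi, abs_neg]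
  calc |MvPolynomial.eval x (f i)| = s⁻¹ * (s * |MvPolynomial.eval x (f i)|) := by field_simp
    _ ≤ δ * |x i| ^ d := by
        rw [habs]
        exact mul_le_mul_of_nonneg_right (inv_lt_of_inv_lt₀ hδ hδs).le (by positivity)

/-! ### The discrete ham sandwich theorem -/

section Substitution

variable {σ τ R : Type*} [CommRing R]

theorem totalDegree_aeval_le {g : σ → MvPolynomial τ R} {D : ℕ} (hg : ∀ i, (g i).totalDegree ≤ D)
    (p : MvPolynomial σ R) : (MvPolynomial.aeval g p).totalDegree ≤ p.totalDegree * D := by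
  rw [MvPolynomial.aeval_def, MvPolynomial.eval₂_eq]
  refine MvPolynomial.totalDegree_finsetSum_le fun b hb => ?_
  rw [MvPolynomial.algebraMap_eq, MvPolynomial.C_mul']
  refine (MvPolynomial.totalDegree_smul_le _ _).trans
    ((MvPolynomial.totalDegree_finsetProd _ _).trans ?_)
  calc ∑ i ∈ b.support, (g i ^ b i).totalDegree
      ≤ ∑ i ∈ b.support, b i * D := Finset.sum_le_sum fun i _ =>
        (MvPolynomial.totalDegree_pow _ _).trans (Nat.mul_le_mul_left _ (hg i))
    _ = (b.sum fun _ e => e) * D := (Finset.sum_mul _ _ _).symm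
    _ ≤ p.totalDegree * D := Nat.mul_le_mul_right _ (MvPolynomial.le_totalDegree hb)

theorem eval_aeval (g : σ → MvPolynomial τ R) (x : τ → R) (p : MvPolynomial σ R) :
    MvPolynomial.eval x (MvPolynomial.aeval g p) =
      MvPolynomial.eval (fun i => MvPolynomial.eval x (g i)) p := by
  induction p using MvPolynomial.induction_on with
  | C a => simp
  | add p q hp hq => rw [map_add, map_add, map_add, hp, hq]
  | mul_X p i hp => rw [map_mul, map_mul, map_mul, hp, MvPolynomial.aeval_X, MvPolynomial.eval_X]

theorem eval_smul_of_isHomogeneous {F : MvPolynomial σ R} {d : ℕ}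
    (hF : F.IsHomogeneous d) (c : R) (v : σ → R) :
    MvPolynomial.eval (c • v) F = c ^ d * MvPolynomial.eval v F := by
  simp only [MvPolynomial.eval_eq, Finset.mul_sum, Pi.smul_apply, smul_eq_mul, mul_pow,
    Finset.prod_mul_distrib]
  refine Finset.sum_congr rfl fun b hb => ?_
  have hdeg : ∑ i ∈ b.support, b i = d := by
    simpa [Finsupp.weight_apply, Finsupp.sum] using hF (MvPolynomial.mem_support_iff.mp hb)
  rw [Finset.prod_pow_eq_pow_sum, hdeg]
  ring

end Substitution

section OddForms

variable {n d : ℕ} {F : Fin n → MvPolynomial (Fin (n + 1)) ℝ}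

theorem exists_norm_eq_one_abs_eval_le (hd : Odd d) (hF : ∀ i, (F i).IsHomogeneous d)
    {δ : ℝ} (hδ : 0 < δ) :
    ∃ v : Fin (n + 1) → ℝ, ‖v‖ = 1 ∧ ∀ i, |MvPolynomial.eval v (F i)| ≤ δ := by
  let f (i : Fin n) : MvPolynomial (Fin n) ℝ :=
    MvPolynomial.aeval (Fin.cons 1 MvPolynomial.X : Fin (n + 1) → MvPolynomial (Fin n) ℝ) (F i)
  have hf (i : Fin n) : (f i).totalDegree ≤ d := by
    refine (totalDegree_aeval_le (D := 1) (fun j => ?_) _).trans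
      ((mul_one _).trans_le (hF i).totalDegree_le)
    refine Fin.cases ?_ (fun j => ?_) j <;> simp
  have heval (x : Fin n → ℝ) (i : Fin n) :
      MvPolynomial.eval x (f i) = MvPolynomial.eval (Fin.cons 1 x : Fin (n + 1) → ℝ) (F i) := by
    rw [eval_aeval]
    congr 2
    ext j
    refine Fin.cases ?_ (fun j => ?_) j <;> simp
  obtain ⟨x, hx⟩ := exists_abs_eval_le_mul_abs_pow hd hf hδ
  set w : Fin (n + 1) → ℝ := Fin.cons 1 x
  have hw : 0 < ‖w‖ := norm_pos_iff.mpr fun h => one_ne_zero (congrFun h 0)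
  refine ⟨‖w‖⁻¹ • w, norm_smul_inv_norm (𝕜 := ℝ) (norm_pos_iff.mp hw), fun i => ?_⟩
  have hxw : |x i| ≤ ‖w‖ := norm_le_pi_norm w i.succ
  calc |MvPolynomial.eval (‖w‖⁻¹ • w) (F i)|
      = (‖w‖ ^ d)⁻¹ * |MvPolynomial.eval x (f i)| := by
        rw [eval_smul_of_isHomogeneous (hF i), abs_mul, abs_of_pos (by positivity), heval, inv_pow]
    _ ≤ (‖w‖ ^ d)⁻¹ * (δ * ‖w‖ ^ d) := by
        gcongr
        exact (hx i).trans (by gcongr)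
    _ = δ := by field_simp

theorem exists_ne_zero_eval_eq_zero_of_isHomogeneous (hd : Odd d)
    (hF : ∀ i, (F i).IsHomogeneous d) :
    ∃ v : Fin (n + 1) → ℝ, v ≠ 0 ∧ ∀ i, MvPolynomial.eval v (F i) = 0 := by
  let Φ : (Fin (n + 1) → ℝ) → Fin n → ℝ := fun v i => MvPolynomial.eval v (F i)
  have hΦ : Continuous fun v => ‖Φ v‖ :=
    (continuous_pi fun i => MvPolynomial.continuous_eval (F i)).norm
  have hne : (Metric.sphere (0 : Fin (n + 1) → ℝ) 1).Nonempty :=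
    NormedSpace.sphere_nonempty.mpr zero_le_one
  obtain ⟨v, hv, hmin⟩ := (isCompact_sphere _ _).exists_isMinOn hne hΦ.continuousOn
  refine ⟨v, Metric.ne_of_mem_sphere hv one_ne_zero, ?_⟩
  by_contra hv0
  have hpos : 0 < ‖Φ v‖ := norm_pos_iff.mpr fun h => hv0 (congrFun h)
  obtain ⟨w, hw, hwF⟩ := exists_norm_eq_one_abs_eval_le hd hF (half_pos hpos)
  have hle : ‖Φ v‖ ≤ ‖Φ w‖ := hmin (mem_sphere_zero_iff_norm.mpr hw)
  have hhalf : ‖Φ w‖ ≤ ‖Φ v‖ / 2 := (pi_norm_le_iff_of_nonneg (half_pos hpos).le).mpr hwF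
  linarith

end OddForms

section LinearForm

variable {σ R : Type*} [Fintype σ] [CommRing R]

/-- The linear form with coefficient vector `a`. -/
def linearForm (a : σ → R) : MvPolynomial σ R :=
  ∑ j, MvPolynomial.C (a j) * MvPolynomial.X j

theorem eval_linearForm (a v : σ → R) : MvPolynomial.eval v (linearForm a) = a ⬝ᵥ v := by
  simp [linearForm, dotProduct]

theorem isHomogeneous_linearForm (a : σ → R) : (linearForm a).IsHomogeneous 1 :=
  MvPolynomial.IsHomogeneous.sum _ _ _ fun j _ => MvPolynomial.isHomogeneous_C_mul_X (a j) j

end LinearForm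

section OddSum

variable {m : ℕ} {X : Type*} (a : X → Fin m → ℝ) (S : Finset X) (r : Polynomial ℝ)

/-- The form of degree `2 * r.natDegree + 1` that agrees on the unit sphere with the odd function
`v ↦ ∑ x ∈ S, t * r (t ^ 2)`, where `t = a x ⬝ᵥ v`. -/
def oddSumForm : MvPolynomial (Fin m) ℝ :=
  ∑ x ∈ S, linearForm (a x) * ∑ k ∈ Finset.range (r.natDegree + 1),
    MvPolynomial.C (r.coeff k) * (linearForm (a x) ^ 2) ^ k *
      (∑ j, MvPolynomial.X j ^ 2) ^ (r.natDegree - k)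

theorem isHomogeneous_oddSumForm : (oddSumForm a S r).IsHomogeneous (2 * r.natDegree + 1) := by
  refine MvPolynomial.IsHomogeneous.sum _ _ _ fun x _ => ?_
  rw [add_comm (2 * r.natDegree)]
  refine (isHomogeneous_linearForm (a x)).mul
    (MvPolynomial.IsHomogeneous.sum _ _ _ fun k hk => ?_)
  have hQ : (∑ j : Fin m, MvPolynomial.X j ^ 2 : MvPolynomial (Fin m) ℝ).IsHomogeneous 2 :=
    MvPolynomial.IsHomogeneous.sum _ _ _ fun j _ => MvPolynomial.isHomogeneous_X_pow j 2
  have hdeg : 2 * r.natDegree = 1 * 2 * k + 2 * (r.natDegree - k) := by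
    have := Finset.mem_range_succ_iff.mp hk
    omega
  rw [hdeg]
  exact ((((isHomogeneous_linearForm (a x)).pow 2).pow k).C_mul _).mul (hQ.pow _)

theorem eval_oddSumForm {v : Fin m → ℝ} (hv : v ⬝ᵥ v = 1) :
    MvPolynomial.eval v (oddSumForm a S r) =
      ∑ x ∈ S, (a x ⬝ᵥ v) * r.eval ((a x ⬝ᵥ v) ^ 2) := by
  have hQ : ∑ j, v j ^ 2 = 1 := by simpa only [dotProduct, sq] using hv
  simp [oddSumForm, eval_linearForm, hQ, Polynomial.eval_eq_sum_range]

end OddSum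

theorem exists_sum_odd_eq_zero {n : ℕ} {X : Type*} (a : X → Fin (n + 1) → ℝ) (S : Fin n → Finset X)
    (r : Polynomial ℝ) : ∃ v : Fin (n + 1) → ℝ, v ⬝ᵥ v = 1 ∧
      ∀ i, ∑ x ∈ S i, (a x ⬝ᵥ v) * r.eval ((a x ⬝ᵥ v) ^ 2) = 0 := by
  obtain ⟨w, hw, hwS⟩ := exists_ne_zero_eval_eq_zero_of_isHomogeneous
    (odd_two_mul_add_one r.natDegree) fun i => isHomogeneous_oddSumForm a (S i) r
  have hww : 0 < w ⬝ᵥ w := lt_of_le_of_ne (Finset.sum_nonneg fun j _ => mul_self_nonneg (w j))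
    (Ne.symm (dotProduct_self_eq_zero.not.mpr hw))
  have hunit : ((√(w ⬝ᵥ w))⁻¹ • w) ⬝ᵥ ((√(w ⬝ᵥ w))⁻¹ • w) = 1 := by
    rw [smul_dotProduct, dotProduct_smul, smul_smul, smul_eq_mul, ← mul_inv,
      Real.mul_self_sqrt hww.le, inv_mul_cancel₀ hww.ne']
  refine ⟨_, hunit, fun i => ?_⟩
  rw [← eval_oddSumForm a (S i) r hunit, eval_smul_of_isHomogeneous (isHomogeneous_oddSumForm ..),
    hwS, mul_zero]

theorem exists_polynomial_mul_eval_sq_near_sign {R η : ℝ} (hR : 0 < R) (hη : 0 < η) :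
    ∃ r : Polynomial ℝ, (∀ t : ℝ, |t| ≤ R → |t * r.eval (t ^ 2)| ≤ 1 + η) ∧
      (∀ t : ℝ, η ≤ t → t ≤ R → 1 - η ≤ t * r.eval (t ^ 2)) := by
  let g : ℝ → ℝ := fun u => (max η √u)⁻¹
  have hmax (u : ℝ) : 0 < max η u := hη.trans_le (le_max_left _ _)
  have hg : Continuous g := Continuous.inv₀ (by fun_prop) fun u => (hmax _).ne'
  have hgsq (t : ℝ) : g (t ^ 2) = (max η |t|)⁻¹ := by simp only [g, Real.sqrt_sq_eq_abs]
  obtain ⟨r, hr⟩ := exists_polynomial_near_of_continuousOn 0 (R ^ 2) g hg.continuousOn (η / R)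
    (by positivity)
  have hnear (t : ℝ) (ht : |t| ≤ R) : |t * r.eval (t ^ 2) - t * g (t ^ 2)| ≤ η := by
    have hrt := hr (t ^ 2) ⟨by positivity, by rw [← sq_abs t]; gcongr⟩
    calc |t * r.eval (t ^ 2) - t * g (t ^ 2)| = |t| * |r.eval (t ^ 2) - g (t ^ 2)| := by
          rw [← mul_sub, abs_mul]
      _ ≤ R * (η / R) := by gcongr
      _ = η := by field_simp
  refine ⟨r, fun t ht => ?_, fun t hηt htR => ?_⟩
  · have hle : |t * g (t ^ 2)| ≤ 1 := by
      rw [hgsq, abs_mul, abs_of_pos (inv_pos.mpr (hmax _)), ← div_eq_mul_inv]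
      exact div_le_one_of_le₀ (le_max_right _ _) (hmax _).le
    calc |t * r.eval (t ^ 2)|
        ≤ |t * r.eval (t ^ 2) - t * g (t ^ 2)| + |t * g (t ^ 2)| :=
          (congrArg abs (sub_add_cancel _ _).symm).trans_le (abs_add_le _ _)
      _ ≤ 1 + η := by linarith [hnear t ht]
  · have ht : 0 < t := hη.trans_le hηt
    have heq : t * g (t ^ 2) = 1 := by
      rw [hgsq, abs_of_pos ht, max_eq_right hηt, mul_inv_cancel₀ ht.ne']
    have hlow := (abs_le.mp (hnear t (by rwa [abs_of_pos ht]))).1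
    linarith

theorem two_mul_card_le_card_of_sum_eq_zero {X : Type*} {S T : Finset X} (hTS : T ⊆ S) {h : X → ℝ}
    {η : ℝ} (hη : η * S.card < 1) (hsum : ∑ x ∈ S, h x = 0) (hS : ∀ x ∈ S, |h x| ≤ 1 + η)
    (hT : ∀ x ∈ T, 1 - η ≤ h x) : 2 * T.card ≤ S.card := by
  have hlowT : T.card • (1 - η) ≤ ∑ x ∈ T, h x := Finset.card_nsmul_le_sum _ _ _ hT
  have hlowST : (S \ T).card • (-(1 + η)) ≤ ∑ x ∈ S \ T, h x :=
    Finset.card_nsmul_le_sum _ _ _ fun x hx =>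
      (abs_le.mp (hS x (Finset.mem_sdiff.mp hx).1)).1
  have hsplit : ∑ x ∈ S \ T, h x + ∑ x ∈ T, h x = 0 := (Finset.sum_sdiff hTS).trans hsum
  have hcard : ((S \ T).card : ℝ) = S.card - T.card := by
    rw [Finset.card_sdiff_of_subset hTS, Nat.cast_sub (Finset.card_le_card hTS)]
  rw [nsmul_eq_mul] at hlowT hlowST
  rw [hcard] at hlowST
  have hlt : (2 * T.card : ℝ) < S.card + 1 := by nlinarith
  exact Nat.lt_succ_iff.mp (by exact_mod_cast hlt)

section HamSandwich

variable {n : ℕ} {X : Type*} (a : X → Fin (n + 1) → ℝ) (S : Fin n → Finset X)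

theorem abs_le_one_of_dotProduct_self_eq_one {m : ℕ} {v : Fin m → ℝ} (hv : v ⬝ᵥ v = 1)
    (j : Fin m) : |v j| ≤ 1 := by
  rw [← sq_le_one_iff_abs_le_one, sq, ← hv]
  exact Finset.single_le_sum (f := fun j => v j * v j) (fun j _ => mul_self_nonneg (v j))
    (Finset.mem_univ j)

theorem isCompact_setOf_dotProduct_self_eq_one (m : ℕ) :
    IsCompact {v : Fin m → ℝ | v ⬝ᵥ v = 1} := by
  refine (isCompact_closedBall (0 : Fin m → ℝ) 1).of_isClosed_subset
    (isClosed_eq (by fun_prop) continuous_const) fun v hv => ?_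
  rw [mem_closedBall_zero_iff, pi_norm_le_iff_of_nonneg zero_le_one]
  exact abs_le_one_of_dotProduct_self_eq_one hv

theorem exists_forall_abs_dotProduct_le {m : ℕ} (a : X → Fin m → ℝ) (U : Finset X) :
    ∃ R : ℝ, 0 < R ∧ ∀ x ∈ U, ∀ v : Fin m → ℝ, v ⬝ᵥ v = 1 → |a x ⬝ᵥ v| ≤ R := by
  obtain ⟨R, hR⟩ := (U.image fun x => ∑ j, |a x j|).exists_le
  refine ⟨max R 1, by positivity, fun x hx v hv => ?_⟩
  calc |a x ⬝ᵥ v| ≤ ∑ j, |a x j * v j| := Finset.abs_sum_le_sum_abs _ _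
    _ ≤ ∑ j, |a x j| := Finset.sum_le_sum fun j _ => by
        rw [abs_mul]
        exact mul_le_of_le_one_right (abs_nonneg _) (abs_le_one_of_dotProduct_self_eq_one hv j)
    _ ≤ max R 1 := (hR _ (Finset.mem_image_of_mem _ hx)).trans (le_max_left _ _)

theorem exists_approx_ham_sandwich {δ : ℝ} (hδ : 0 < δ) :
    ∃ v : Fin (n + 1) → ℝ, v ⬝ᵥ v = 1 ∧ ∀ i,
      2 * ((S i).filter fun x => δ < a x ⬝ᵥ v).card ≤ (S i).card ∧
      2 * ((S i).filter fun x => a x ⬝ᵥ v < -δ).card ≤ (S i).card := by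
  obtain ⟨R, hR, hbound⟩ := exists_forall_abs_dotProduct_le a (Finset.univ.biUnion S)
  replace hbound (i : Fin n) (x : X) (hx : x ∈ S i) (v : Fin (n + 1) → ℝ) (hv : v ⬝ᵥ v = 1) :
      |a x ⬝ᵥ v| ≤ R := hbound x (Finset.mem_biUnion.mpr ⟨i, Finset.mem_univ i, hx⟩) v hv
  obtain ⟨N, hN⟩ := (Finset.univ.image fun i => (S i).card).exists_le
  let η : ℝ := min δ (1 / (N + 1))
  have hη : 0 < η := by positivity
  have hηS (i : Fin n) : η * (S i).card < 1 := by
    have hcard : ((S i).card : ℝ) ≤ N := by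
      exact_mod_cast hN _ (Finset.mem_image_of_mem _ (Finset.mem_univ i))
    calc η * (S i).card ≤ 1 / (N + 1) * N := by
          gcongr
          exact min_le_right _ _
      _ < 1 := by
          rw [one_div_mul_eq_div, div_lt_one (by positivity)]
          exact lt_add_one _
  obtain ⟨r, hle, hge⟩ := exists_polynomial_mul_eval_sq_near_sign hR hη
  obtain ⟨v, hv, hvS⟩ := exists_sum_odd_eq_zero a S r
  refine ⟨v, hv, fun i => ⟨?_, ?_⟩⟩
  · refine two_mul_card_le_card_of_sum_eq_zero (Finset.filter_subset _ _) (hηS i) (hvS i)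
      (fun x hx => hle _ (hbound i x hx v hv)) fun x hx => ?_
    obtain ⟨hxS, hx⟩ := Finset.mem_filter.mp hx
    exact hge _ ((min_le_left _ _).trans hx.le) (abs_le.mp (hbound i x hxS v hv)).2
  · have hneg : ∑ x ∈ S i, -((a x ⬝ᵥ v) * r.eval ((a x ⬝ᵥ v) ^ 2)) = 0 := by
      rw [Finset.sum_neg_distrib, hvS i, neg_zero]
    refine two_mul_card_le_card_of_sum_eq_zero (Finset.filter_subset _ _) (hηS i) hneg
      (fun x hx => (abs_neg _).trans_le (hle _ (hbound i x hx v hv))) fun x hx => ?_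
    obtain ⟨hxS, hx⟩ := Finset.mem_filter.mp hx
    have := hge (-(a x ⬝ᵥ v)) ((min_le_left _ _).trans (by linarith))
      (by linarith [(abs_le.mp (hbound i x hxS v hv)).1])
    rwa [neg_sq, neg_mul] at this

theorem exists_ham_sandwich :
    ∃ v : Fin (n + 1) → ℝ, v ≠ 0 ∧ ∀ i,
      2 * ((S i).filter fun x => 0 < a x ⬝ᵥ v).card ≤ (S i).card ∧
      2 * ((S i).filter fun x => a x ⬝ᵥ v < 0).card ≤ (S i).card := by
  choose w hw hwS using fun k : ℕ =>
    exists_approx_ham_sandwich a S (Nat.one_div_pos_of_nat (n := k))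
  obtain ⟨v, hv, φ, hφ, hlim⟩ := (isCompact_setOf_dotProduct_self_eq_one (n + 1)).tendsto_subseq hw
  have hδ : Filter.Tendsto (fun k => 1 / ((φ k : ℝ) + 1)) Filter.atTop (nhds 0) :=
    tendsto_one_div_add_atTop_nhds_zero_nat.comp hφ.tendsto_atTop
  have hdot (x : X) : Filter.Tendsto (fun k => a x ⬝ᵥ w (φ k)) Filter.atTop (nhds (a x ⬝ᵥ v)) :=
    ((by fun_prop : Continuous fun u : Fin (n + 1) → ℝ => a x ⬝ᵥ u).tendsto v).comp hlim
  refine ⟨v, ?_, fun i => ⟨?_, ?_⟩⟩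
  · rintro rfl
    simp at hv
  · obtain ⟨k, hk⟩ := ((Filter.eventually_all_finset ((S i).filter fun x => 0 < a x ⬝ᵥ v)).mpr
      fun x hx => hδ.eventually_lt (hdot x) (Finset.mem_filter.mp hx).2).exists
    refine le_trans ?_ (hwS (φ k) i).1
    gcongr 2 * Finset.card ?_
    exact fun x hx => Finset.mem_filter.mpr ⟨(Finset.mem_filter.mp hx).1, hk x hx⟩
  · obtain ⟨k, hk⟩ := ((Filter.eventually_all_finset ((S i).filter fun x => a x ⬝ᵥ v < 0)).mpr
      fun x hx => (hdot x).eventually_lt hδ.neg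
        ((Finset.mem_filter.mp hx).2.trans_eq neg_zero.symm)).exists
    refine le_trans ?_ (hwS (φ k) i).2
    gcongr 2 * Finset.card ?_
    exact fun x hx => Finset.mem_filter.mpr ⟨(Finset.mem_filter.mp hx).1, hk x hx⟩

end HamSandwich

/-! ### Polynomial partitioning -/

/-- The cell of sign pattern `s` in the partition of space by the polynomials `g`. Signs are units
of `ℤ`, so the points at which some `g j` vanishes lie in no cell. -/
def signCell {ι σ : Type*} (g : ι → MvPolynomial σ ℝ) (s : ι → ℤˣ) : Set (σ → ℝ) :=
  {y | ∀ j, 0 < ((s j : ℤ) : ℝ) * MvPolynomial.eval y (g j)}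

theorem two_mul_card_filter_mul_le {X : Type*} {S : Finset X} {f : X → ℝ}
    (hpos : 2 * (S.filter fun x => 0 < f x).card ≤ S.card)
    (hneg : 2 * (S.filter fun x => f x < 0).card ≤ S.card) (u : ℤˣ) :
    2 * (S.filter fun x => 0 < ((u : ℤ) : ℝ) * f x).card ≤ S.card := by
  obtain rfl | rfl := Int.units_eq_one_or u
  · simpa using hpos
  · simpa using hneg

theorem exists_polynomial_bisecting {d e : ℕ} {X ι : Type*} [Fintype ι] (pt : X → Fin d → ℝ)
    (hι : Fintype.card ι < e ^ d) (S : ι → Finset X) :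
    ∃ f : MvPolynomial (Fin d) ℝ, f ≠ 0 ∧ f.totalDegree ≤ d * e ∧ ∀ (i : ι) (u : ℤˣ),
      2 * ((S i).filter fun x => 0 < ((u : ℤ) : ℝ) * MvPolynomial.eval (pt x) f).card ≤
        (S i).card := by
  obtain ⟨mono⟩ : Nonempty (Fin (Fintype.card ι + 1) ↪ (Fin d → Fin e)) :=
    Function.Embedding.nonempty_of_card_le (by simpa using hι)
  let expo : Fin (Fintype.card ι + 1) → (Fin d →₀ ℕ) := fun j =>
    Finsupp.equivFunOnFinite.symm fun i => mono j i
  have hexpo : Function.Injective expo := fun j k hjk => mono.injective <| funext fun i =>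
    Fin.ext (DFunLike.congr_fun hjk i)
  obtain ⟨v, hv, hS⟩ := exists_ham_sandwich (fun x j => ∏ i, pt x i ^ (mono j i : ℕ))
    (S ∘ (Fintype.equivFin ι).symm)
  let f : MvPolynomial (Fin d) ℝ := ∑ j, MvPolynomial.monomial (expo j) (v j)
  have hcoeff : ∀ j, MvPolynomial.coeff (expo j) f = v j := fun j => by
    simp [f, MvPolynomial.coeff_sum, MvPolynomial.coeff_monomial, hexpo.eq_iff]
  have heval : ∀ x, MvPolynomial.eval (pt x) f = (fun j => ∏ i, pt x i ^ (mono j i : ℕ)) ⬝ᵥ v := by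
    intro x
    simp [f, expo, MvPolynomial.eval_monomial, Finsupp.prod_fintype, dotProduct, mul_comm]
  refine ⟨f, fun hf => hv (funext fun j => by simp [← hcoeff, hf]), ?_, fun i u => ?_⟩
  · refine MvPolynomial.totalDegree_finsetSum_le fun j _ =>
      (MvPolynomial.totalDegree_monomial_le _ _).trans ?_
    rw [Finsupp.sum_fintype _ _ fun _ => rfl]
    simpa [expo] using Finset.sum_le_card_nsmul Finset.univ (fun i => (mono j i : ℕ)) e
      fun i _ => (mono j i).isLt.le
  · obtain ⟨hpos, hneg⟩ := hS (Fintype.equivFin ι i)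
    simp only [Function.comp_apply, Equiv.symm_apply_apply, ← heval] at hpos hneg
    exact two_mul_card_filter_mul_le hpos hneg u

theorem mem_signCell_snoc {J : ℕ} {σ : Type*} (g : Fin J → MvPolynomial σ ℝ) (f : MvPolynomial σ ℝ)
    (s : Fin (J + 1) → ℤˣ) (y : σ → ℝ) :
    y ∈ signCell (Fin.snoc (α := fun _ => MvPolynomial σ ℝ) g f) s ↔
      y ∈ signCell g (Fin.init s) ∧
        0 < ((s (Fin.last J) : ℤ) : ℝ) * MvPolynomial.eval y f := by
  simp [signCell, Fin.forall_fin_succ', Fin.init]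

theorem exists_partition_of_length {d : ℕ} (hd : 0 < d) {X : Type*} (pt : X → Fin d → ℝ)
    (P : Finset X) (J : ℕ) :
    ∃ g : Fin J → MvPolynomial (Fin d) ℝ,
      (∀ j, g j ≠ 0 ∧ (g j).totalDegree ≤ d * 2 ^ ((j : ℕ) / d + 1)) ∧
      ∀ s, (P.filter fun x => pt x ∈ signCell g s).card * 2 ^ J ≤ P.card := by
  induction J with
  | zero => exact ⟨Fin.elim0, fun j => j.elim0, fun s => by simpa using Finset.card_filter_le P _⟩
  | succ J ih =>
    obtain ⟨g, hg, hcell⟩ := ih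
    have hcard : Fintype.card (Fin J → ℤˣ) < (2 ^ (J / d + 1)) ^ d := by
      rw [← pow_mul, Fintype.card_fun, Fintype.card_units_int, Fintype.card_fin]
      refine Nat.pow_lt_pow_right one_lt_two ?_
      linarith [Nat.lt_div_mul_add (a := J) hd]
    obtain ⟨f, hf0, hfdeg, hf⟩ := exists_polynomial_bisecting pt hcard
      fun s => P.filter fun x => pt x ∈ signCell g s
    refine ⟨Fin.snoc g f, Fin.lastCases (by simpa using ⟨hf0, hfdeg⟩) (by simpa using hg),
      fun s => ?_⟩
    have hbisect := hf (Fin.init s) (s (Fin.last J))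
    simp only [Finset.filter_filter, ← mem_signCell_snoc] at hbisect
    calc _ = 2 * (P.filter fun x => pt x ∈ signCell (Fin.snoc g f) s).card * 2 ^ J := by ring
      _ ≤ (P.filter fun x => pt x ∈ signCell g (Fin.init s)).card * 2 ^ J :=
        Nat.mul_le_mul_right _ hbisect
      _ ≤ P.card := hcell _

theorem sum_range_mul_two_pow_div_le {d : ℕ} (hd : 0 < d) (M : ℕ) :
    ∑ j ∈ Finset.range (d * M), d * 2 ^ (j / d + 1) ≤ 2 * d ^ 2 * 2 ^ M := by
  induction M with
  | zero => simp
  | succ M ih =>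
    have hblock : ∀ j ∈ Finset.range d, d * 2 ^ ((d * M + j) / d + 1) = d * 2 ^ (M + 1) := by
      intro j hj
      rw [Nat.mul_add_div hd, Nat.div_eq_of_lt (Finset.mem_range.mp hj), add_zero]
    rw [Nat.mul_succ, Finset.sum_range_add, Finset.sum_congr rfl hblock, Finset.sum_const,
      Finset.card_range, smul_eq_mul, pow_succ]
    nlinarith

theorem exists_partition {d : ℕ} (hd : 0 < d) {X : Type*} (pt : X → Fin d → ℝ) (P : Finset X)
    (M : ℕ) :
    ∃ g : Fin (d * M) → MvPolynomial (Fin d) ℝ,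
      (∀ j, g j ≠ 0) ∧ ∑ j, (g j).totalDegree ≤ 2 * d ^ 2 * 2 ^ M ∧
      ∀ s, (P.filter fun x => pt x ∈ signCell g s).card * 2 ^ (d * M) ≤ P.card := by
  obtain ⟨g, hg, hcell⟩ := exists_partition_of_length hd pt P (d * M)
  refine ⟨g, fun j => (hg j).1, ?_, hcell⟩
  calc ∑ j, (g j).totalDegree ≤ ∑ j : Fin (d * M), d * 2 ^ ((j : ℕ) / d + 1) :=
        Finset.sum_le_sum fun j _ => (hg j).2
    _ = ∑ j ∈ Finset.range (d * M), d * 2 ^ (j / d + 1) :=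
        Fin.sum_univ_eq_sum_range (fun j => d * 2 ^ (j / d + 1)) _
    _ ≤ 2 * d ^ 2 * 2 ^ M := sum_range_mul_two_pow_div_le hd M

/-! ### Polynomials on ellipses -/

theorem exists_polynomial_eval_eq_pow_mul_eval_div {σ K : Type*} [Field K] {f : MvPolynomial σ K}
    {D k : ℕ} (hf : f.totalDegree ≤ D) {N : σ → Polynomial K} (hN : ∀ i, (N i).natDegree ≤ k)
    {Q : Polynomial K} (hQ : Q.natDegree ≤ k) :
    ∃ q : Polynomial K, q.natDegree ≤ k * D ∧ ∀ t, Q.eval t ≠ 0 →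
      q.eval t = Q.eval t ^ D * MvPolynomial.eval (fun i => (N i).eval t / Q.eval t) f := by
  have hdeg : ∀ m ∈ f.support, m.degree ≤ D := fun m hm =>
    (MvPolynomial.le_totalDegree hm).trans hf
  refine ⟨∑ m ∈ f.support,
    Polynomial.C (f.coeff m) * ((∏ i ∈ m.support, N i ^ m i) * Q ^ (D - m.degree)), ?_, ?_⟩
  · refine Polynomial.natDegree_sum_le_of_forall_le _ _ fun m hm => ?_
    have hprod : (∏ i ∈ m.support, N i ^ m i).natDegree ≤ k * m.degree := by
      rw [Finsupp.degree_apply, Finset.mul_sum]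
      refine (Polynomial.natDegree_prod_le _ _).trans (Finset.sum_le_sum fun i _ => ?_)
      rw [mul_comm]
      exact Polynomial.natDegree_pow_le_of_le _ (hN i)
    calc _ ≤ k * m.degree + (D - m.degree) * k :=
          (Polynomial.natDegree_C_mul_le _ _).trans
            (Polynomial.natDegree_mul_le_of_le hprod (Polynomial.natDegree_pow_le_of_le _ hQ))
      _ = k * D := by rw [mul_comm _ k, ← mul_add, Nat.add_sub_cancel' (hdeg m hm)]
  · intro t ht
    rw [Polynomial.eval_finsetSum, MvPolynomial.eval_eq, Finset.mul_sum]
    refine Finset.sum_congr rfl fun m hm => ?_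
    have hpow : Q.eval t ^ D = Q.eval t ^ (D - m.degree) * ∏ i ∈ m.support, Q.eval t ^ m i := by
      rw [Finset.prod_pow_eq_pow_sum, ← Finsupp.degree_apply, ← pow_add,
        Nat.sub_add_cancel (hdeg m hm)]
    have hprod : (∏ i ∈ m.support, Q.eval t ^ m i) * ∏ i ∈ m.support,
        ((N i).eval t / Q.eval t) ^ m i = ∏ i ∈ m.support, (N i).eval t ^ m i := by
      rw [← Finset.prod_mul_distrib]
      exact Finset.prod_congr rfl fun i _ => by rw [← mul_pow, mul_div_cancel₀ _ ht]
    simp only [Polynomial.eval_mul, Polynomial.eval_C, Polynomial.eval_prod, Polynomial.eval_pow]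
    rw [hpow, ← hprod]
    ring

/-- The unit circle of the coordinate plane, as a real algebraic set. -/
def unitCircle : Set (Fin 2 → ℝ) :=
  {u | u 0 ^ 2 + u 1 ^ 2 = 1}

theorem bijOn_cos_sin_unitCircle :
    Set.BijOn (fun θ => ![Real.cos θ, Real.sin θ]) (Set.Ioc (-Real.pi) Real.pi) unitCircle := by
  refine ⟨fun θ _ => by simp [unitCircle], fun θ hθ η hη h => ?_, fun u hu => ?_⟩
  · have hcos : Real.cos θ = Real.cos η := congrFun h 0
    have hsin : Real.sin θ = Real.sin η := congrFun h 1
    rw [← Complex.arg_cos_add_sin_mul_I hθ, ← Complex.arg_cos_add_sin_mul_I hη,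
      ← Complex.ofReal_cos, ← Complex.ofReal_sin, hcos, hsin, Complex.ofReal_cos,
      Complex.ofReal_sin]
  · have hnorm : ‖(⟨u 0, u 1⟩ : ℂ)‖ = 1 := by
      rw [Complex.norm_eq_sqrt_sq_add_sq, Real.sqrt_eq_one]
      exact hu
    refine ⟨Complex.arg ⟨u 0, u 1⟩, Complex.arg_mem_Ioc _, funext fun i => ?_⟩
    have hcos := Complex.norm_mul_cos_arg ⟨u 0, u 1⟩
    have hsin := Complex.norm_mul_sin_arg ⟨u 0, u 1⟩
    rw [hnorm, one_mul] at hcos hsin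
    fin_cases i
    · exact hcos
    · exact hsin

theorem infinite_unitCircle : unitCircle.Infinite :=
  bijOn_cos_sin_unitCircle.image_eq ▸
    (Set.Ioc_infinite (by linarith [Real.pi_pos])).image bijOn_cos_sin_unitCircle.injOn

theorem coord_eq_div_of_mem_unitCircle {u : Fin 2 → ℝ} (hu : u ∈ unitCircle) {z : ℂ}
    (hz : z = ⟨u 0, u 1⟩) :
    z ≠ 0 ∧ (z ^ 2 + 1) / (2 * z) = u 0 ∧ -Complex.I * (z ^ 2 - 1) / (2 * z) = u 1 := by
  rw [Complex.mk_eq_add_mul_I] at hz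
  have hu' : (u 0 : ℂ) ^ 2 + (u 1 : ℂ) ^ 2 = 1 := by exact_mod_cast hu
  have hz0 : z ≠ 0 := fun h0 => by
    have hnorm : z * (u 0 - u 1 * Complex.I) = 1 := by
      rw [hz]
      linear_combination hu' - (u 1 : ℂ) ^ 2 * Complex.I_sq
    simp [h0] at hnorm
  refine ⟨hz0, ?_, ?_⟩ <;> rw [div_eq_iff (mul_ne_zero two_ne_zero hz0), hz]
  · linear_combination (-1 : ℂ) * hu' + u 1 ^ 2 * Complex.I_sq
  · linear_combination -Complex.I * hu' - (Complex.I * u 1 ^ 2 + 2 * u 0 * u 1) * Complex.I_sq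

theorem exists_polynomial_eval_eq_zero_iff (f : MvPolynomial (Fin 2) ℝ) :
    ∃ q : Polynomial ℂ, q.natDegree ≤ 2 * f.totalDegree ∧ ∀ u ∈ unitCircle,
      q.eval (⟨u 0, u 1⟩ : ℂ) = 0 ↔ u ∈ zeroSet f := by
  let N : Fin 2 → Polynomial ℂ :=
    ![Polynomial.X ^ 2 + 1, Polynomial.C (-Complex.I) * (Polynomial.X ^ 2 - 1)]
  have hN : ∀ i, (N i).natDegree ≤ 2 := by
    refine Fin.forall_fin_two.2 ⟨?_, ?_⟩
    · change (Polynomial.X ^ 2 + 1 : Polynomial ℂ).natDegree ≤ 2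
      compute_degree
    · change (Polynomial.C (-Complex.I) * (Polynomial.X ^ 2 - 1)).natDegree ≤ 2
      compute_degree
  have hdeg : (MvPolynomial.map Complex.ofRealHom f).totalDegree ≤ f.totalDegree :=
    Finset.sup_mono (MvPolynomial.support_map_subset _ _)
  obtain ⟨q, hqdeg, hq⟩ := exists_polynomial_eval_eq_pow_mul_eval_div hdeg hN
    (Q := Polynomial.C 2 * Polynomial.X) (by compute_degree!)
  refine ⟨q, hqdeg, fun u hu => ?_⟩
  obtain ⟨hz0, hre, him⟩ := coord_eq_div_of_mem_unitCircle hu rfl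
  set z : ℂ := ⟨u 0, u 1⟩
  have hden : (Polynomial.C 2 * Polynomial.X : Polynomial ℂ).eval z ≠ 0 := by simpa using hz0
  have hpoint : (fun i => (N i).eval z / (Polynomial.C 2 * Polynomial.X : Polynomial ℂ).eval z) =
      Complex.ofRealHom ∘ u :=
    funext (Fin.forall_fin_two.2 ⟨by simpa [N] using hre, by simpa [N] using him⟩)
  have heval : MvPolynomial.eval (Complex.ofRealHom ∘ u) (MvPolynomial.map Complex.ofRealHom f) =
      MvPolynomial.eval u f := by
    rw [MvPolynomial.eval_map]
    exact (MvPolynomial.eval₂_comp_left Complex.ofRealHom (RingHom.id ℝ) u f).symm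
  rw [hq _ hden, hpoint, heval, mul_eq_zero_iff_left (pow_ne_zero _ hden), Complex.ofReal_eq_zero]
  rfl

theorem encard_unitCircle_inter_zeroSet_le {f : MvPolynomial (Fin 2) ℝ}
    (hf : ¬ unitCircle ⊆ zeroSet f) :
    (unitCircle ∩ zeroSet f).encard ≤ (2 * f.totalDegree : ℕ) := by
  obtain ⟨q, hqdeg, hq⟩ := exists_polynomial_eval_eq_zero_iff f
  have hq0 : q ≠ 0 := by
    rintro rfl
    exact hf fun u hu => (hq u hu).1 Polynomial.eval_zero
  have hmaps : Set.MapsTo (fun u : Fin 2 → ℝ => (⟨u 0, u 1⟩ : ℂ)) (unitCircle ∩ zeroSet f)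
      q.roots.toFinset := fun u hu => by
    simpa [hq0] using (hq u hu.1).2 hu.2
  have hinj : Function.Injective fun u : Fin 2 → ℝ => (⟨u 0, u 1⟩ : ℂ) := fun u v huv => by
    funext i
    fin_cases i
    · exact congrArg Complex.re huv
    · exact congrArg Complex.im huv
  refine (Set.encard_le_encard_of_injOn hmaps hinj.injOn).trans ?_
  rw [Set.encard_coe_eq_coe_finsetCard, Nat.cast_le]
  exact (Multiset.toFinset_card_le _).trans ((Polynomial.card_roots' q).trans hqdeg)

theorem zeroSet_mul {d : ℕ} (f g : MvPolynomial (Fin d) ℝ) :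
    zeroSet (f * g) = zeroSet f ∪ zeroSet g := by
  ext x
  simp [zeroSet]

theorem unitCircle_subset_zeroSet_mul_iff {f g : MvPolynomial (Fin 2) ℝ} :
    unitCircle ⊆ zeroSet (f * g) ↔ unitCircle ⊆ zeroSet f ∨ unitCircle ⊆ zeroSet g := by
  rw [zeroSet_mul]
  refine ⟨fun h => ?_, fun h => h.elim (·.trans Set.subset_union_left)
    (·.trans Set.subset_union_right)⟩
  by_contra! hfg
  refine infinite_unitCircle (Set.Finite.subset (Set.Finite.union
    (Set.finite_of_encard_le_coe (encard_unitCircle_inter_zeroSet_le hfg.1))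
    (Set.finite_of_encard_le_coe (encard_unitCircle_inter_zeroSet_le hfg.2))) ?_)
  rw [← Set.inter_union_distrib_left]
  exact Set.subset_inter subset_rfl h

theorem eq_of_forall_unit_mul_pos {ι : Type*} {s t : ι → ℤˣ} {x : ι → ℝ}
    (hs : ∀ j, 0 < ((s j : ℤ) : ℝ) * x j) (ht : ∀ j, 0 < ((t j : ℤ) : ℝ) * x j) : s = t := by
  funext j
  obtain h | h := Int.units_eq_one_or (s j) <;> obtain h' | h' := Int.units_eq_one_or (t j) <;>
    have hsj := hs j <;> have htj := ht j <;> simp_all <;> linarith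

theorem eq_of_forall_unit_mul_pos_of_ne_zero {ι : Type*} {h : ι → ℝ → ℝ}
    (hcont : ∀ j, Continuous (h j)) {a b : ℝ} (hab : a ≤ b)
    (hne : ∀ j, ∀ x ∈ Set.Icc a b, h j x ≠ 0) {s t : ι → ℤˣ}
    (hs : ∀ j, 0 < ((s j : ℤ) : ℝ) * h j a) (ht : ∀ j, 0 < ((t j : ℤ) : ℝ) * h j b) : s = t := by
  refine eq_of_forall_unit_mul_pos hs fun j => ?_
  by_contra! ha
  have hcont' : ContinuousOn (fun x => ((t j : ℤ) : ℝ) * h j x) (Set.Icc a b) :=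
    (continuous_const.mul (hcont j)).continuousOn
  obtain ⟨x, hx, hx0⟩ := intermediate_value_Icc hab hcont' ⟨ha, (ht j).le⟩
  exact hne j x hx ((mul_eq_zero.1 hx0).resolve_left (by simp))

theorem card_signPatterns_le {ι : Type*} [Fintype ι] [DecidableEq ι] {h : ι → ℝ → ℝ}
    (hcont : ∀ j, Continuous (h j)) {I : Set ℝ} [I.OrdConnected] {R : Finset ℝ}
    (hR : ∀ x ∈ I, ∀ j, h j x = 0 → x ∈ R) :
    (Finset.univ.filter fun s : ι → ℤˣ => ∃ x ∈ I, ∀ j, 0 < ((s j : ℤ) : ℝ) * h j x).card ≤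
      R.card + 1 := by
  have hwitness : ∀ s : ι → ℤˣ, ∃ x, (∃ x ∈ I, ∀ j, 0 < ((s j : ℤ) : ℝ) * h j x) →
      x ∈ I ∧ ∀ j, 0 < ((s j : ℤ) : ℝ) * h j x := fun s => by
    by_cases hs : ∃ x ∈ I, ∀ j, 0 < ((s j : ℤ) : ℝ) * h j x
    · exact ⟨hs.choose, fun _ => hs.choose_spec⟩
    · exact ⟨0, fun h => absurd h hs⟩
  choose x hx using hwitness
  have hinj : ∀ s, (∃ x ∈ I, ∀ j, 0 < ((s j : ℤ) : ℝ) * h j x) →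
      ∀ t, (∃ x ∈ I, ∀ j, 0 < ((t j : ℤ) : ℝ) * h j x) → x s ≤ x t →
      (R.filter (· ≤ x s)).card = (R.filter (· ≤ x t)).card → s = t := by
    intro s hs t ht hst hcard
    have hfilter : R.filter (· ≤ x s) = R.filter (· ≤ x t) :=
      Finset.eq_of_subset_of_card_le (Finset.monotone_filter_right R fun y _ hy => hy.trans hst)
        hcard.ge
    refine eq_of_forall_unit_mul_pos_of_ne_zero hcont hst (fun j y hy hy0 => ?_)
      (hx s hs).2 (hx t ht).2
    have hyR := hR y (Set.Icc_subset _ (hx s hs).1 (hx t ht).1 hy) j hy0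
    have hyR' : y ∈ R.filter (· ≤ x s) := hfilter ▸ Finset.mem_filter.2 ⟨hyR, hy.2⟩
    rw [le_antisymm (Finset.mem_filter.1 hyR').2 hy.1] at hy0
    simpa [hy0] using (hx s hs).2 j
  rw [← Finset.card_range (R.card + 1)]
  refine Finset.card_le_card_of_injOn (fun s => (R.filter (· ≤ x s)).card)
    (fun s _ => by simpa [Nat.lt_succ_iff] using Finset.card_filter_le R _) fun s hs t ht hst => ?_
  replace hs := (Finset.mem_filter.1 hs).2
  replace ht := (Finset.mem_filter.1 ht).2
  rcases le_total (x s) (x t) with hle | hle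
  · exact hinj s hs t ht hle hst
  · exact (hinj t ht s hs hle hst.symm).symm

theorem card_signCell_unitCircle_le {ι : Type*} [Fintype ι] [DecidableEq ι]
    {g : ι → MvPolynomial (Fin 2) ℝ}
    (hg : ¬ unitCircle ⊆ zeroSet (∏ j, g j)) :
    (Finset.univ.filter fun s => (unitCircle ∩ signCell g s).Nonempty).card ≤
      2 * (∏ j, g j).totalDegree + 1 := by
  set pt : ℝ → Fin 2 → ℝ := fun θ => ![Real.cos θ, Real.sin θ]
  have hpt : Continuous pt := by fun_prop
  have hcard : (Set.Ioc (-Real.pi) Real.pi ∩ pt ⁻¹' zeroSet (∏ j, g j)).encard ≤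
      (2 * (∏ j, g j).totalDegree : ℕ) :=
    (Set.encard_le_encard_of_injOn (t := unitCircle ∩ zeroSet (∏ j, g j))
      (fun θ hθ => ⟨bijOn_cos_sin_unitCircle.mapsTo hθ.1, hθ.2⟩)
      (bijOn_cos_sin_unitCircle.injOn.mono Set.inter_subset_left)).trans
      (encard_unitCircle_inter_zeroSet_le hg)
  have hfin := Set.finite_of_encard_le_coe hcard
  rw [hfin.encard_eq_coe_toFinset_card, Nat.cast_le] at hcard
  refine le_trans (Finset.card_le_card fun s hs => ?_) ((card_signPatterns_le
    (h := fun j θ => MvPolynomial.eval (pt θ) (g j)) (I := Set.Ioc (-Real.pi) Real.pi)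
    (fun j => (MvPolynomial.continuous_eval _).comp hpt) (R := hfin.toFinset)
    fun θ hθ j h0 => ?_).trans (Nat.add_le_add_right hcard 1))
  · obtain ⟨u, hu, hus⟩ := (Finset.mem_filter.1 hs).2
    obtain ⟨θ, hθ, rfl⟩ := bijOn_cos_sin_unitCircle.surjOn hu
    exact Finset.mem_filter.2 ⟨Finset.mem_univ _, θ, hθ, hus⟩
  · refine hfin.mem_toFinset.2 ⟨hθ, ?_⟩
    rw [Set.mem_preimage, zeroSet, Set.mem_ofPred_eq, map_prod]
    exact Finset.prod_eq_zero (Finset.mem_univ j) h0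

section Ellipse

variable {d : ℕ} (c U W : Fin d → ℝ)

/-- The affine map from the coordinate plane to `ℝ^d` sending the origin to `c` and the standard
basis vectors to `c + U` and `c + W`. -/
def planeMap (u : Fin 2 → ℝ) : Fin d → ℝ :=
  c + u 0 • U + u 1 • W

/-- The ellipse with centre `c` and conjugate semi-axes `U` and `W`. It is degenerate, i.e. a
segment or a point, when `U` and `W` are linearly dependent. -/
def ellipse : Set (Fin d → ℝ) :=
  planeMap c U W '' unitCircle

/-- The pullback of a polynomial on `ℝ^d` along `planeMap c U W`. -/
def planePullback : MvPolynomial (Fin d) ℝ →ₐ[ℝ] MvPolynomial (Fin 2) ℝ :=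
  MvPolynomial.aeval fun i =>
    MvPolynomial.C (c i) + MvPolynomial.C (U i) * MvPolynomial.X 0 +
      MvPolynomial.C (W i) * MvPolynomial.X 1

theorem eval_planePullback (u : Fin 2 → ℝ) (f : MvPolynomial (Fin d) ℝ) :
    MvPolynomial.eval u (planePullback c U W f) = MvPolynomial.eval (planeMap c U W u) f := by
  rw [planePullback, eval_aeval]
  congr 2
  funext i
  simp [planeMap, mul_comm]

theorem totalDegree_planePullback_le (f : MvPolynomial (Fin d) ℝ) :
    (planePullback c U W f).totalDegree ≤ f.totalDegree := by
  refine (totalDegree_aeval_le (D := 1) (fun i => ?_) f).trans (mul_one _).le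
  have hmul : ∀ (a : ℝ) (j : Fin 2),
      (MvPolynomial.C a * MvPolynomial.X j : MvPolynomial (Fin 2) ℝ).totalDegree ≤ 1 :=
    fun a j => (MvPolynomial.totalDegree_mul _ _).trans (by simp)
  exact (MvPolynomial.totalDegree_add _ _).trans (max_le
    ((MvPolynomial.totalDegree_add _ _).trans (max_le (by simp) (hmul _ _))) (hmul _ _))

variable {c U W}

theorem planeMap_preimage_zeroSet (f : MvPolynomial (Fin d) ℝ) :
    planeMap c U W ⁻¹' zeroSet f = zeroSet (planePullback c U W f) := by
  ext u
  simp [zeroSet, eval_planePullback]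

theorem ellipse_subset_zeroSet_iff {f : MvPolynomial (Fin d) ℝ} :
    ellipse c U W ⊆ zeroSet f ↔ unitCircle ⊆ zeroSet (planePullback c U W f) := by
  rw [ellipse, Set.image_subset_iff, planeMap_preimage_zeroSet]

theorem ellipse_subset_zeroSet_mul_iff {f g : MvPolynomial (Fin d) ℝ} :
    ellipse c U W ⊆ zeroSet (f * g) ↔ ellipse c U W ⊆ zeroSet f ∨ ellipse c U W ⊆ zeroSet g := by
  simp only [ellipse_subset_zeroSet_iff, map_mul, unitCircle_subset_zeroSet_mul_iff]

theorem encard_ellipse_inter_zeroSet_le {f : MvPolynomial (Fin d) ℝ}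
    (hf : ¬ ellipse c U W ⊆ zeroSet f) :
    (ellipse c U W ∩ zeroSet f).encard ≤ (2 * f.totalDegree : ℕ) := by
  rw [ellipse, ← Set.image_inter_preimage, planeMap_preimage_zeroSet]
  refine (Set.encard_image_le _ _).trans
    ((encard_unitCircle_inter_zeroSet_le (ellipse_subset_zeroSet_iff.not.1 hf)).trans ?_)
  exact_mod_cast Nat.mul_le_mul_left 2 (totalDegree_planePullback_le c U W f)

theorem card_signCell_ellipse_le {ι : Type*} [Fintype ι] [DecidableEq ι]
    {g : ι → MvPolynomial (Fin d) ℝ}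
    (hg : ¬ ellipse c U W ⊆ zeroSet (∏ j, g j)) :
    (Finset.univ.filter fun s => (ellipse c U W ∩ signCell g s).Nonempty).card ≤
      2 * (∏ j, g j).totalDegree + 1 := by
  have hcell : ∀ s, (ellipse c U W ∩ signCell g s).Nonempty ↔
      (unitCircle ∩ signCell (fun j => planePullback c U W (g j)) s).Nonempty := fun s => by
    simp [ellipse, Set.Nonempty, signCell, eval_planePullback]
  rw [ellipse_subset_zeroSet_iff, map_prod] at hg
  simp only [hcell]
  refine (card_signCell_unitCircle_le hg).trans ?_
  rw [← map_prod]
  gcongr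
  exact totalDegree_planePullback_le c U W _

end Ellipse

/-! ### Circles -/

open scoped Matrix

theorem sq_dotProduct_cross (u v w : Fin 3 → ℝ) :
    (w ⬝ᵥ u ⨯₃ v) ^ 2 = (u ⬝ᵥ u) * (v ⬝ᵥ v) * (w ⬝ᵥ w) + 2 * (u ⬝ᵥ v) * (w ⬝ᵥ v) * (w ⬝ᵥ u) -
      (u ⬝ᵥ u) * (w ⬝ᵥ v) ^ 2 - (v ⬝ᵥ v) * (w ⬝ᵥ u) ^ 2 - (w ⬝ᵥ w) * (u ⬝ᵥ v) ^ 2 := by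
  simp only [cross_apply, dotProduct, Fin.sum_univ_three, Matrix.cons_val]
  ring

/-- Orthogonal vectors `U` and `W` of the same length `ρ > 0`, which are radii of the circle
`ellipse c U W` for any centre `c`. -/
structure IsCircleFrame (ρ : ℝ) (U W : Fin 3 → ℝ) : Prop where
  pos : 0 < ρ
  left : U ⬝ᵥ U = ρ ^ 2
  right : W ⬝ᵥ W = ρ ^ 2
  orthogonal : U ⬝ᵥ W = 0

theorem exists_dotProduct_eq_zero (v : Fin 3 → ℝ) : ∃ u ≠ 0, u ⬝ᵥ v = 0 := by
  by_cases hv : v 1 = 0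
  · exact ⟨Pi.single 1 1, by simp, by simp [hv]⟩
  · refine ⟨![-v 1, v 0, 0], fun h => hv (neg_eq_zero.1 (congrFun h 0)), ?_⟩
    simp only [dotProduct, Fin.sum_univ_three, Matrix.cons_val]
    ring

theorem exists_smul_dotProduct_self_eq {v : Fin 3 → ℝ} (hv : v ≠ 0) {ρ : ℝ} (hρ : 0 < ρ) :
    ∃ k : ℝ, 0 < k ∧ (k • v) ⬝ᵥ (k • v) = ρ ^ 2 := by
  have hpos : 0 < v ⬝ᵥ v := by simpa using Matrix.dotProduct_star_self_pos_iff.2 hv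
  refine ⟨ρ / √(v ⬝ᵥ v), div_pos hρ (Real.sqrt_pos.2 hpos), ?_⟩
  rw [smul_dotProduct, dotProduct_smul, smul_smul, ← sq, div_pow, Real.sq_sqrt hpos.le,
    smul_eq_mul, div_mul_cancel₀ _ hpos.ne']

theorem exists_isCircleFrame {v : Fin 3 → ℝ} (hv : v ≠ 0) {ρ : ℝ} (hρ : 0 < ρ) :
    ∃ U W, IsCircleFrame ρ U W ∧ ∃ k : ℝ, k ≠ 0 ∧ U ⨯₃ W = k • v := by
  obtain ⟨u, hu, huv⟩ := exists_dotProduct_eq_zero v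
  obtain ⟨a, -, hU⟩ := exists_smul_dotProduct_self_eq hu hρ
  obtain ⟨b, hb, hV⟩ := exists_smul_dotProduct_self_eq hv one_pos
  set U := a • u with hUdef
  set V := b • v with hVdef
  have hUV : U ⬝ᵥ V = 0 := by
    rw [hUdef, hVdef, smul_dotProduct, dotProduct_smul, huv, smul_zero, smul_zero]
  refine ⟨U, V ⨯₃ U, ⟨hρ, hU, ?_, dot_cross_self _ _⟩, ρ ^ 2 * b, by positivity, ?_⟩
  · rw [cross_dot_cross, hU, hV, dotProduct_comm V U, hUV]
    ring
  · rw [cross_cross_eq_smul_sub_smul', hU, dotProduct_comm V U, hUV, zero_smul, sub_zero, hVdef,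
      smul_smul]

namespace IsCircleFrame

variable {ρ : ℝ} {U W : Fin 3 → ℝ}

theorem ne_zero (h : IsCircleFrame ρ U W) : ρ ^ 2 ≠ 0 :=
  pow_ne_zero 2 h.pos.ne'

theorem orthogonal' (h : IsCircleFrame ρ U W) : W ⬝ᵥ U = 0 :=
  (dotProduct_comm W U).trans h.orthogonal

theorem smul_add_smul_dotProduct_left (h : IsCircleFrame ρ U W) (a b : ℝ) :
    (a • U + b • W) ⬝ᵥ U = ρ ^ 2 * a := by
  simp [h.left, h.orthogonal', mul_comm]

theorem smul_add_smul_dotProduct_right (h : IsCircleFrame ρ U W) (a b : ℝ) :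
    (a • U + b • W) ⬝ᵥ W = ρ ^ 2 * b := by
  simp [h.right, h.orthogonal, mul_comm]

theorem sq_dotProduct_cross (h : IsCircleFrame ρ U W) (w : Fin 3 → ℝ) :
    (w ⬝ᵥ U ⨯₃ W) ^ 2 = ρ ^ 4 * (w ⬝ᵥ w) - ρ ^ 2 * ((w ⬝ᵥ U) ^ 2 + (w ⬝ᵥ W) ^ 2) := by
  rw [_root_.sq_dotProduct_cross, h.left, h.right, h.orthogonal]
  ring

theorem eq_smul_add_smul (h : IsCircleFrame ρ U W) {w : Fin 3 → ℝ} (hw : (U ⨯₃ W) ⬝ᵥ w = 0) :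
    w = ((w ⬝ᵥ U) / ρ ^ 2) • U + ((w ⬝ᵥ W) / ρ ^ 2) • W := by
  set w' := ((w ⬝ᵥ U) / ρ ^ 2) • U + ((w ⬝ᵥ W) / ρ ^ 2) • W with hw'
  have hU : (w - w') ⬝ᵥ U = 0 := by
    rw [sub_dotProduct, hw', h.smul_add_smul_dotProduct_left, mul_div_cancel₀ _ h.ne_zero, sub_self]
  have hW : (w - w') ⬝ᵥ W = 0 := by
    rw [sub_dotProduct, hw', h.smul_add_smul_dotProduct_right, mul_div_cancel₀ _ h.ne_zero,
      sub_self]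
  have hN : (w - w') ⬝ᵥ U ⨯₃ W = 0 := by
    rw [sub_dotProduct, dotProduct_comm w, hw, hw', add_dotProduct, smul_dotProduct,
      smul_dotProduct, dot_self_cross, dot_cross_self]
    simp
  have hself := h.sq_dotProduct_cross (w - w')
  rw [hU, hW, hN] at hself
  rw [← sub_eq_zero, ← dotProduct_self_eq_zero]
  simpa [h.pos.ne'] using hself.symm

theorem ellipse_eq (h : IsCircleFrame ρ U W) (c : Fin 3 → ℝ) :
    ellipse c U W = {x | (x - c) ⬝ᵥ (x - c) = ρ ^ 2 ∧ (U ⨯₃ W) ⬝ᵥ (x - c) = 0} := by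
  ext x
  constructor
  · rintro ⟨u, hu, rfl⟩
    have hsub : planeMap c U W u - c = u 0 • U + u 1 • W := by
      rw [planeMap]
      abel
    rw [Set.mem_ofPred_eq, hsub, dotProduct_add, dotProduct_smul, dotProduct_smul,
      h.smul_add_smul_dotProduct_left, h.smul_add_smul_dotProduct_right, dotProduct_comm (U ⨯₃ W),
      add_dotProduct, smul_dotProduct, smul_dotProduct, dot_self_cross, dot_cross_self]
    refine ⟨?_, by simp⟩
    simp only [smul_eq_mul]
    have hu1 : u 0 ^ 2 + u 1 ^ 2 = 1 := hu
    linear_combination ρ ^ 2 * hu1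
  · rintro ⟨hx, hN⟩
    have hself := h.sq_dotProduct_cross (x - c)
    rw [dotProduct_comm, hN, hx] at hself
    refine ⟨![((x - c) ⬝ᵥ U) / ρ ^ 2, ((x - c) ⬝ᵥ W) / ρ ^ 2], ?_, ?_⟩
    · change (_ / ρ ^ 2) ^ 2 + (_ / ρ ^ 2) ^ 2 = 1
      rw [div_pow, div_pow, ← add_div, div_eq_one_iff_eq (pow_ne_zero 2 h.ne_zero)]
      refine mul_left_cancel₀ h.ne_zero ?_
      linear_combination hself
    · rw [planeMap, add_assoc, ← eq_sub_iff_add_eq']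
      exact (h.eq_smul_add_smul hN).symm

theorem injective_planeMap (h : IsCircleFrame ρ U W) (c : Fin 3 → ℝ) :
    Function.Injective (planeMap c U W) := by
  intro u v huv
  have heq : u 0 • U + u 1 • W = v 0 • U + v 1 • W := by
    simpa [planeMap, add_assoc] using huv
  refine funext (Fin.forall_fin_two.2
    ⟨mul_left_cancel₀ h.ne_zero ?_, mul_left_cancel₀ h.ne_zero ?_⟩)
  · rw [← h.smul_add_smul_dotProduct_left, heq, h.smul_add_smul_dotProduct_left]
  · rw [← h.smul_add_smul_dotProduct_right, heq, h.smul_add_smul_dotProduct_right]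

theorem infinite_ellipse (h : IsCircleFrame ρ U W) (c : Fin 3 → ℝ) : (ellipse c U W).Infinite :=
  infinite_unitCircle.image (h.injective_planeMap c).injOn

end IsCircleFrame

theorem IsCircle.exists_frame {γ : Set (Fin 3 → ℝ)} (hγ : IsCircle γ) :
    ∃ c U W ρ, IsCircleFrame ρ U W ∧ γ = ellipse c U W := by
  obtain ⟨c, v, ρ, hρ, hv, rfl⟩ := hγ
  obtain ⟨U, W, h, k, hk, hN⟩ := exists_isCircleFrame hv hρ
  refine ⟨c, U, W, ρ, h, ?_⟩
  ext x
  rw [h.ellipse_eq, hN, Set.mem_ofPred_eq, Set.mem_ofPred_eq, smul_dotProduct, smul_eq_mul,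
    mul_eq_zero_iff_left hk]
  simp only [dotProduct, Pi.sub_apply, sq]

theorem IsCircle.infinite {γ : Set (Fin 3 → ℝ)} (hγ : IsCircle γ) : γ.Infinite := by
  obtain ⟨c, U, W, ρ, h, rfl⟩ := hγ.exists_frame
  exact h.infinite_ellipse c

theorem dotProduct_add_eq_zero_of_mem_ellipse {d : ℕ} {c U W a : Fin d → ℝ} {b : ℝ}
    {S : Set (Fin d → ℝ)} (hS : 2 < (ellipse c U W ∩ S).encard)
    (hab : ∀ x ∈ ellipse c U W ∩ S, a ⬝ᵥ x + b = 0) : ∀ x ∈ ellipse c U W, a ⬝ᵥ x + b = 0 := by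
  set f := linearForm a + MvPolynomial.C b with hf
  have hmem : ∀ x, x ∈ zeroSet f ↔ a ⬝ᵥ x + b = 0 := by simp [zeroSet, hf, eval_linearForm]
  have hdeg : f.totalDegree ≤ 1 := (MvPolynomial.totalDegree_add _ _).trans
    (max_le (isHomogeneous_linearForm a).totalDegree_le (by simp))
  simp only [← hmem] at hab ⊢
  by_contra hcon
  refine hS.not_ge ((Set.encard_le_encard (Set.subset_inter Set.inter_subset_left hab)).trans
    ((encard_ellipse_inter_zeroSet_le hcon).trans ?_))
  exact_mod_cast Nat.mul_le_mul_left 2 hdeg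

theorem IsCircle.subset_of_two_lt_encard_inter {γ γ' : Set (Fin 3 → ℝ)} (hγ : IsCircle γ)
    (hγ' : IsCircle γ') (h : 2 < (γ ∩ γ').encard) : γ ⊆ γ' := by
  obtain ⟨c, U, W, ρ, hUW, rfl⟩ := hγ.exists_frame
  obtain ⟨c', U', W', ρ', hUW', rfl⟩ := hγ'.exists_frame
  have hradical : ∀ x ∈ ellipse c U W, ((2 : ℝ) • (c - c')) ⬝ᵥ x +
      (c' ⬝ᵥ c' - c ⬝ᵥ c - ρ' ^ 2 + ρ ^ 2) = (x - c') ⬝ᵥ (x - c') - ρ' ^ 2 := fun x hx => by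
    rw [hUW.ellipse_eq] at hx
    have hx1 := hx.1
    simp only [dotProduct_sub, sub_dotProduct, smul_dotProduct, smul_eq_mul] at hx1 ⊢
    rw [dotProduct_comm x c] at hx1
    rw [dotProduct_comm x c']
    linear_combination -hx1
  have hsphere := dotProduct_add_eq_zero_of_mem_ellipse h fun x hx => by
    rw [hradical x hx.1, sub_eq_zero]
    rw [hUW'.ellipse_eq] at hx
    exact hx.2.1
  have hplane := dotProduct_add_eq_zero_of_mem_ellipse (a := U' ⨯₃ W') (b := -(U' ⨯₃ W') ⬝ᵥ c') h
    fun x hx => by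
      rw [hUW'.ellipse_eq] at hx
      rw [neg_dotProduct, ← sub_eq_add_neg, ← dotProduct_sub]
      exact hx.2.2
  intro x hx
  rw [hUW'.ellipse_eq]
  refine ⟨sub_eq_zero.1 ((hradical x hx).symm.trans (hsphere x hx)), ?_⟩
  rw [dotProduct_sub, sub_eq_add_neg, ← neg_dotProduct]
  exact hplane x hx

theorem IsCircle.eq_of_two_lt_encard_inter {γ γ' : Set (Fin 3 → ℝ)} (hγ : IsCircle γ)
    (hγ' : IsCircle γ') (h : 2 < (γ ∩ γ').encard) : γ = γ' :=
  (hγ.subset_of_two_lt_encard_inter hγ' h).antisymm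
    (hγ'.subset_of_two_lt_encard_inter hγ (Set.inter_comm γ γ' ▸ h))

theorem IsCircle.eq_of_subset {γ γ' : Set (Fin 3 → ℝ)} (hγ : IsCircle γ) (hγ' : IsCircle γ')
    (h : γ ⊆ γ') : γ = γ' := by
  refine hγ.eq_of_two_lt_encard_inter hγ' ?_
  rw [Set.inter_eq_left.2 h, hγ.infinite.encard_eq]
  exact ENat.natCast_lt_top 2

/-! ### Incidences -/

section Incidences

variable {d : ℕ} (P : Finset (Fin d → ℝ)) (C : Finset (Set (Fin d → ℝ)))

theorem incidences_eq_sum : Incidences P C = ∑ γ ∈ C, (P.filter (· ∈ γ)).card := by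
  simp only [Incidences, Finset.card_filter, Finset.sum_product_right]

theorem incidences_le_mul : Incidences P C ≤ P.card * C.card :=
  (Finset.card_filter_le _ _).trans (Finset.card_product P C).le

variable {P C}

theorem incidences_filter_right {q : Set (Fin d → ℝ) → Prop}
    (hq : ∀ γ ∈ C, ∀ p ∈ P, p ∈ γ → q γ) : Incidences P (C.filter q) = Incidences P C := by
  rw [incidences_eq_sum, incidences_eq_sum, Finset.sum_filter_of_ne]
  intro γ hγ hne
  obtain ⟨p, hp⟩ := Finset.card_ne_zero.1 hne
  exact hq γ hγ p (Finset.mem_filter.1 hp).1 (Finset.mem_filter.1 hp).2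

theorem le_add_choose_succ (n k : ℕ) : n ≤ k + n.choose (k + 1) := by
  induction n with
  | zero => exact Nat.zero_le _
  | succ n ih =>
    rw [Nat.choose_succ_succ']
    rcases lt_or_ge n k with hnk | hnk
    · omega
    · have := Nat.choose_pos hnk
      omega

/-- A weak form of the Kővári–Sós–Turán bound. -/
theorem incidences_le_add_pow {k s : ℕ}
    (hC : ∀ T : Finset (Fin d → ℝ), T.card = k + 1 → (C.filter fun γ => ∀ p ∈ T, p ∈ γ).card ≤ s) :
    Incidences P C ≤ k * C.card + s * P.card ^ (k + 1) := by
  have hswap : ∑ γ ∈ C, (P.filter (· ∈ γ)).card.choose (k + 1) =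
      ∑ T ∈ P.powersetCard (k + 1), (C.filter fun γ => ∀ p ∈ T, p ∈ γ).card := by
    have hfilter : ∀ γ : Set (Fin d → ℝ), (P.filter (· ∈ γ)).powersetCard (k + 1) =
        (P.powersetCard (k + 1)).filter fun T => ∀ p ∈ T, p ∈ γ := fun γ => by
      ext T
      simp only [Finset.mem_powersetCard, Finset.mem_filter, Finset.subset_iff]
      grind
    simp only [← Finset.card_powersetCard, hfilter]
    exact Finset.sum_card_bipartiteAbove_eq_sum_card_bipartiteBelow fun γ T => ∀ p ∈ T, p ∈ γ
  calc Incidences P C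
      ≤ ∑ γ ∈ C, (k + (P.filter (· ∈ γ)).card.choose (k + 1)) := by
        rw [incidences_eq_sum]
        exact Finset.sum_le_sum fun γ _ => le_add_choose_succ _ _
    _ = k * C.card + ∑ T ∈ P.powersetCard (k + 1), (C.filter fun γ => ∀ p ∈ T, p ∈ γ).card := by
        rw [Finset.sum_add_distrib, Finset.sum_const, smul_eq_mul, mul_comm, hswap]
    _ ≤ k * C.card + s * P.card ^ (k + 1) := by
        gcongr
        refine (Finset.sum_le_card_nsmul _ _ s fun T hT =>
          hC T (Finset.mem_powersetCard.1 hT).2).trans ?_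
        rw [smul_eq_mul, mul_comm, Finset.card_powersetCard]
        gcongr
        exact Nat.choose_le_pow _ _

variable {ι : Type*} [Fintype ι] [DecidableEq ι] (g : ι → MvPolynomial (Fin d) ℝ)

theorem card_filter_mem_signCell (x : Fin d → ℝ) :
    (Finset.univ.filter fun s => x ∈ signCell g s).card +
      (if x ∈ zeroSet (∏ j, g j) then 1 else 0) = 1 := by
  have hzero : x ∈ zeroSet (∏ j, g j) ↔ ∃ j, MvPolynomial.eval x (g j) = 0 := by
    simp [zeroSet, map_prod, Finset.prod_eq_zero_iff]
  split_ifs with hx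
  · obtain ⟨j, hj⟩ := hzero.1 hx
    rw [Finset.filter_false_of_mem, Finset.card_empty]
    intro s _ hs
    simpa [hj] using hs j
  · have hne := not_exists.1 (hzero.not.1 hx)
    rw [add_zero, Finset.card_eq_one]
    have hcell : x ∈ signCell g fun j => if 0 < MvPolynomial.eval x (g j) then 1 else -1 := by
      intro j
      dsimp only
      split_ifs with hj
      · simpa using hj
      · simpa using lt_of_le_of_ne (not_lt.1 hj) (hne j)
    exact ⟨_, Finset.eq_singleton_iff_unique_mem.2 ⟨Finset.mem_filter.2 ⟨Finset.mem_univ _, hcell⟩,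
      fun s hs => eq_of_forall_unit_mul_pos (Finset.mem_filter.1 hs).2 hcell⟩⟩

variable (P C)

theorem sum_card_filter_mem_signCell :
    ∑ s, (P.filter (· ∈ signCell g s)).card + (P.filter (· ∈ zeroSet (∏ j, g j))).card =
      P.card := by
  have hswap := Finset.sum_card_bipartiteAbove_eq_sum_card_bipartiteBelow (s := Finset.univ)
    (t := P) fun s x => x ∈ signCell g s
  rw [Finset.card_eq_sum_ones P, Finset.card_filter, ← Finset.sum_congr rfl fun x _ =>
    card_filter_mem_signCell g x, Finset.sum_add_distrib]
  exact congrArg (· + _) hswap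

theorem incidences_eq_sum_signCell_add :
    Incidences P C = ∑ s, Incidences (P.filter (· ∈ signCell g s)) C +
      Incidences (P.filter (· ∈ zeroSet (∏ j, g j))) C := by
  simp only [incidences_eq_sum]
  rw [Finset.sum_comm, ← Finset.sum_add_distrib]
  refine Finset.sum_congr rfl fun γ _ => ?_
  rw [← sum_card_filter_mem_signCell (P.filter (· ∈ γ)) g]
  simp only [Finset.filter_filter, and_comm]

variable {C}

theorem incidences_zeroSet_le {f : MvPolynomial (Fin d) ℝ} {B : ℕ}
    (hB : ∀ γ ∈ C, ¬ γ ⊆ zeroSet f → (γ ∩ zeroSet f).encard ≤ B) :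
    Incidences (P.filter (· ∈ zeroSet f)) C ≤
      Incidences (P.filter (· ∈ zeroSet f)) (C.filter (· ⊆ zeroSet f)) + B * C.card := by
  rw [incidences_eq_sum, incidences_eq_sum, ← Finset.sum_filter_add_sum_filter_not C
    (· ⊆ zeroSet f)]
  gcongr
  refine (Finset.sum_le_card_nsmul _ _ B fun γ hγ => ?_).trans ?_
  · rw [Finset.mem_filter] at hγ
    have hsub : (((P.filter (· ∈ zeroSet f)).filter (· ∈ γ) : Finset _) : Set (Fin d → ℝ)) ⊆
        γ ∩ zeroSet f := fun p hp => by
      simp only [Finset.coe_filter, Finset.mem_filter, Set.mem_ofPred_eq] at hp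
      exact ⟨hp.2, hp.1.2⟩
    have := (Set.encard_le_encard hsub).trans (hB γ hγ.1 hγ.2)
    rwa [Set.encard_coe_eq_coe_finsetCard, Nat.cast_le] at this
  · rw [smul_eq_mul, mul_comm]
    gcongr
    exact Finset.filter_subset _ _

theorem sum_card_filter_inter_signCell_le {B : ℕ}
    (hB : ∀ γ ∈ C, (Finset.univ.filter fun s => (γ ∩ signCell g s).Nonempty).card ≤ B) :
    ∑ s, (C.filter fun γ => (γ ∩ signCell g s).Nonempty).card ≤ B * C.card := by
  have hswap := Finset.sum_card_bipartiteAbove_eq_sum_card_bipartiteBelow (s := Finset.univ)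
    (t := C) fun s γ => (γ ∩ signCell g s).Nonempty
  refine hswap.trans_le ?_
  rw [mul_comm, ← smul_eq_mul]
  exact Finset.sum_le_card_nsmul _ _ _ hB

end Incidences

/-! ### Generic projections -/

theorem eq_zero_of_forall_sq_add_sq_eq_one {a b : MvPolynomial (Fin 1) ℝ}
    (h : ∀ (s : Fin 1 → ℝ) (y : ℝ), y ^ 2 + s 0 ^ 2 = 1 →
      MvPolynomial.eval s a * y + MvPolynomial.eval s b = 0) : a = 0 ∧ b = 0 := by
  have hab : ∀ s : Fin 1 → ℝ, s 0 ∈ Set.Ioo (-1) 1 →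
      MvPolynomial.eval s a = 0 ∧ MvPolynomial.eval s b = 0 := fun s hs => by
    have hpos : 0 < 1 - s 0 ^ 2 := by nlinarith [hs.1, hs.2]
    have hsq := Real.sq_sqrt hpos.le
    have hplus := h s (√(1 - s 0 ^ 2)) (by linarith)
    have hminus := h s (-√(1 - s 0 ^ 2)) (by linarith [neg_sq (√(1 - s 0 ^ 2))])
    refine ⟨(mul_eq_zero.1 ?_).resolve_right (Real.sqrt_pos.2 hpos).ne', by linarith⟩
    linarith
  have hinf : ∀ _ : Fin 1, (Set.Ioo (-1 : ℝ) 1).Infinite := fun _ => Set.Ioo_infinite (by norm_num)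
  refine ⟨MvPolynomial.funext_set _ hinf fun s hs => ?_,
    MvPolynomial.funext_set _ hinf fun s hs => ?_⟩
  · rw [(hab s (hs 0 trivial)).1, map_zero]
  · rw [(hab s (hs 0 trivial)).2, map_zero]

theorem dvd_of_unitCircle_subset_zeroSet {f : MvPolynomial (Fin 2) ℝ}
    (hf : unitCircle ⊆ zeroSet f) :
    (MvPolynomial.X 0 ^ 2 + MvPolynomial.X 1 ^ 2 - 1 : MvPolynomial (Fin 2) ℝ) ∣ f := by
  set φ := MvPolynomial.finSuccEquiv ℝ 1
  set q : Polynomial (MvPolynomial (Fin 1) ℝ) :=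
    Polynomial.X ^ 2 + Polynomial.C (MvPolynomial.X 0 ^ 2 - 1) with hqdef
  have hq : φ (MvPolynomial.X 0 ^ 2 + MvPolynomial.X 1 ^ 2 - 1) = q := by
    have hX1 : φ (MvPolynomial.X 1) = Polynomial.C (MvPolynomial.X 0) :=
      MvPolynomial.finSuccEquiv_X_succ (j := 0)
    rw [map_sub, map_add, map_pow, map_pow, map_one, MvPolynomial.finSuccEquiv_X_zero, hX1, hqdef,
      map_sub, map_pow, map_one, add_sub_assoc]
  have hmonic : q.Monic := Polynomial.monic_X_pow_add_C _ two_ne_zero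
  have hqdeg : q.natDegree = 2 := Polynomial.natDegree_X_pow_add_C
  have hlt : (φ f %ₘ q).natDegree < 2 := hqdeg ▸
    Polynomial.natDegree_modByMonic_lt (φ f) hmonic fun h1 => by simp [h1] at hqdeg
  obtain ⟨a, b, hab⟩ := Polynomial.exists_eq_X_add_C_of_natDegree_le_one (Nat.le_of_lt_succ hlt)
  obtain ⟨rfl, rfl⟩ := eq_zero_of_forall_sq_add_sq_eq_one (a := a) (b := b) fun s y hy => by
    have hfy : MvPolynomial.eval (Fin.cons y s : Fin 2 → ℝ) f = 0 := hf hy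
    rw [MvPolynomial.eval_eq_eval_mv_eval', ← Polynomial.modByMonic_add_div (φ f) q, hab] at hfy
    have hqy : y ^ 2 + (s 0 ^ 2 - 1) = 0 := by linear_combination hy
    simpa [q, hqy] using hfy
  rw [← map_dvd_iff φ, hq, ← Polynomial.modByMonic_eq_zero_iff_dvd hmonic, hab]
  simp

theorem zeroSet_subset_of_dvd {d : ℕ} {f g : MvPolynomial (Fin d) ℝ} (h : f ∣ g) :
    zeroSet f ⊆ zeroSet g := by
  obtain ⟨r, rfl⟩ := h
  rw [zeroSet_mul]
  exact Set.subset_union_left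

theorem exists_planeMap_inverse {c U W : Fin 2 → ℝ} (h : U 0 * W 1 - U 1 * W 0 ≠ 0) :
    ∃ c' U' W' : Fin 2 → ℝ, Function.LeftInverse (planeMap c' U' W') (planeMap c U W) ∧
      Function.RightInverse (planeMap c' U' W') (planeMap c U W) := by
  set Δ := U 0 * W 1 - U 1 * W 0 with hΔ
  refine ⟨![(W 0 * c 1 - W 1 * c 0) / Δ, (U 1 * c 0 - U 0 * c 1) / Δ], ![W 1 / Δ, -U 1 / Δ],
    ![-W 0 / Δ, U 0 / Δ], fun u => funext (Fin.forall_fin_two.2 ⟨?_, ?_⟩),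
    fun x => funext (Fin.forall_fin_two.2 ⟨?_, ?_⟩)⟩ <;>
  · simp only [planeMap, Pi.add_apply, Pi.smul_apply, smul_eq_mul, Matrix.cons_val]
    field_simp
    rw [hΔ]
    ring

theorem exists_prime_zeroSet_eq_ellipse {c U W : Fin 2 → ℝ} (h : U 0 * W 1 - U 1 * W 0 ≠ 0) :
    ∃ e : MvPolynomial (Fin 2) ℝ, Prime e ∧ zeroSet e = ellipse c U W ∧
      ∀ f, ellipse c U W ⊆ zeroSet f → e ∣ f := by
  obtain ⟨c', U', W', hleft, hright⟩ := exists_planeMap_inverse (c := c) h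
  set q : MvPolynomial (Fin 2) ℝ := MvPolynomial.X 0 ^ 2 + MvPolynomial.X 1 ^ 2 - 1 with hq
  have hzq : zeroSet q = unitCircle := by
    ext u
    simp [zeroSet, unitCircle, hq, sub_eq_zero]
  set e := planePullback c' U' W' q with he
  have hze : zeroSet e = ellipse c U W := by
    rw [he, ← planeMap_preimage_zeroSet, hzq, ellipse,
      Set.image_eq_preimage_of_inverse hleft hright]
  have hdvd : ∀ f, ellipse c U W ⊆ zeroSet f → e ∣ f := fun f hf => by
    have hinv : planePullback c' U' W' (planePullback c U W f) = f :=
      MvPolynomial.funext fun x => by rw [eval_planePullback, eval_planePullback, hright]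
    rw [← hinv]
    exact map_dvd _ (dvd_of_unitCircle_subset_zeroSet (ellipse_subset_zeroSet_iff.1 hf))
  have hunit : ¬ IsUnit e := fun hu =>
    (infinite_unitCircle.nonempty.image (planeMap c U W)).ne_empty (Set.subset_eq_empty
      (hze ▸ zeroSet_subset_of_dvd (isUnit_iff_dvd_one.1 hu)) (by simp [zeroSet]))
  have hne : e ≠ 0 := fun h0 => by
    have hc : planeMap c U W 0 ∈ zeroSet e := by simp [h0, zeroSet]
    rw [hze, ellipse, hleft.injective.mem_set_image] at hc
    simp [unitCircle] at hc
  refine ⟨e, ⟨hne, hunit, fun f g hfg => ?_⟩, hze, hdvd⟩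
  exact (ellipse_subset_zeroSet_mul_iff.1 (hze ▸ zeroSet_subset_of_dvd hfg)).imp (hdvd f) (hdvd g)

theorem totalDegree_pos_of_prime {σ K : Type*} [Field K] {e : MvPolynomial σ K} (he : Prime e) :
    0 < e.totalDegree := by
  by_contra! hdeg
  rw [Nat.le_zero, MvPolynomial.totalDegree_eq_zero_iff_eq_C] at hdeg
  refine he.not_isUnit (hdeg ▸ (IsUnit.mk0 _ fun h0 => he.ne_zero ?_).map MvPolynomial.C)
  rw [hdeg, h0, map_zero]

theorem card_le_totalDegree_prod_of_prime {ι σ K : Type*} [Field K] {S : Finset ι}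
    {e : ι → MvPolynomial σ K} (he : ∀ i ∈ S, Prime (e i)) :
    S.card ≤ (∏ i ∈ S, e i).totalDegree := by
  induction S using Finset.cons_induction with
  | empty => simp
  | cons i S hi ih =>
    rw [Finset.forall_mem_cons] at he
    rw [Finset.prod_cons, Finset.card_cons, MvPolynomial.totalDegree_mul_of_isDomain he.1.ne_zero
      (Finset.prod_ne_zero_iff.2 fun j hj => (he.2 j hj).ne_zero), add_comm]
    exact Nat.add_le_add (totalDegree_pos_of_prime he.1) (ih he.2)

theorem card_le_totalDegree_of_prime_dvd {ι σ K : Type*} [Field K] {S : Finset ι}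
    {e : ι → MvPolynomial σ K} {f : MvPolynomial σ K} (hf : f ≠ 0) (he : ∀ i ∈ S, Prime (e i))
    (hne : ∀ i ∈ S, ∀ j ∈ S, i ≠ j → ¬ e i ∣ e j) (hdvd : ∀ i ∈ S, e i ∣ f) :
    S.card ≤ f.totalDegree := by
  refine (card_le_totalDegree_prod_of_prime he).trans
    (MvPolynomial.totalDegree_le_of_dvd_of_isDomain
      (Finset.prod_dvd_of_isRelPrime (fun i hi j hj hij => ?_) hdvd) hf)
  exact (he i hi).irreducible.isRelPrime_iff_not_dvd.2 (hne i hi j hj hij)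

/-- The pullback of a polynomial along the linear map with matrix `L`. -/
def linearPullback {k d : ℕ} (L : Matrix (Fin k) (Fin d) ℝ) :
    MvPolynomial (Fin k) ℝ →ₐ[ℝ] MvPolynomial (Fin d) ℝ :=
  MvPolynomial.aeval fun i => linearForm (L i)

section LinearPullback

variable {k d : ℕ} (L : Matrix (Fin k) (Fin d) ℝ)

theorem eval_linearPullback (f : MvPolynomial (Fin k) ℝ) (x : Fin d → ℝ) :
    MvPolynomial.eval x (linearPullback L f) = MvPolynomial.eval (L.mulVec x) f := by
  rw [linearPullback, eval_aeval]
  simp only [eval_linearForm]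
  rfl

theorem mulVec_preimage_zeroSet (f : MvPolynomial (Fin k) ℝ) :
    L.mulVec ⁻¹' zeroSet f = zeroSet (linearPullback L f) := by
  ext x
  simp only [zeroSet, Set.mem_preimage, Set.mem_ofPred_eq, eval_linearPullback]

theorem totalDegree_linearPullback_le (f : MvPolynomial (Fin k) ℝ) :
    (linearPullback L f).totalDegree ≤ f.totalDegree :=
  (totalDegree_aeval_le (fun _ => (isHomogeneous_linearForm _).totalDegree_le) f).trans
    (mul_one _).le

theorem mulVec_image_ellipse (c U W : Fin d → ℝ) :
    L.mulVec '' ellipse c U W = ellipse (L *ᵥ c) (L *ᵥ U) (L *ᵥ W) := by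
  rw [ellipse, Set.image_image, ellipse]
  simp only [planeMap, Matrix.mulVec_add, Matrix.mulVec_smul]
  rfl

end LinearPullback

/-- A property of points of `ℝ^σ` holds generically if it holds off the zero set of some nonzero
polynomial. -/
def Generically {σ : Type*} (p : (σ → ℝ) → Prop) : Prop :=
  ∃ F : MvPolynomial σ ℝ, F ≠ 0 ∧ ∀ z, MvPolynomial.eval z F ≠ 0 → p z

namespace Generically

variable {σ : Type*}

theorem exists_point {p : (σ → ℝ) → Prop} (h : Generically p) : ∃ z, p z := by
  obtain ⟨F, hF, h⟩ := h
  by_contra! hp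
  exact hF (MvPolynomial.funext fun z => by simpa using not_imp_comm.1 (h z) (hp z))

theorem forall_mem {ι : Type*} {S : Finset ι} {p : ι → (σ → ℝ) → Prop}
    (h : ∀ i ∈ S, Generically (p i)) : Generically fun z => ∀ i ∈ S, p i z := by
  choose! F hF h using h
  refine ⟨∏ i ∈ S, F i, Finset.prod_ne_zero_iff.2 hF, fun z hz i hi => h i hi z ?_⟩
  rw [map_prod, Finset.prod_ne_zero_iff] at hz
  exact hz i hi

theorem and {p q : (σ → ℝ) → Prop} (hp : Generically p) (hq : Generically q) :
    Generically fun z => p z ∧ q z := by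
  obtain ⟨F, hF, hp⟩ := hp
  obtain ⟨G, hG, hq⟩ := hq
  refine ⟨F * G, mul_ne_zero hF hG, fun z hz => ?_⟩
  rw [map_mul, mul_ne_zero_iff] at hz
  exact ⟨hp z hz.1, hq z hz.2⟩

end Generically

theorem exists_cross_eq (z : Fin 3 → ℝ) : ∃ u v : Fin 3 → ℝ, u ⨯₃ v = z := by
  obtain rfl | hz := eq_or_ne z 0
  · exact ⟨0, 0, cross_self 0⟩
  · obtain ⟨U, W, -, k, hk, hN⟩ := exists_isCircleFrame hz one_pos
    exact ⟨k⁻¹ • U, W, by rw [LinearMap.map_smul₂, hN, smul_smul, inv_mul_cancel₀ hk, one_smul]⟩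

theorem IsCircleFrame.cross_ne_zero {ρ : ℝ} {U W : Fin 3 → ℝ} (h : IsCircleFrame ρ U W) :
    U ⨯₃ W ≠ 0 := fun h0 => by
  have hself := cross_dot_cross U W U W
  rw [h0, h.left, h.right, h.orthogonal, zero_mul, sub_zero, dotProduct_zero] at hself
  exact mul_ne_zero h.ne_zero h.ne_zero hself.symm

theorem linearForm_ne_zero {d : ℕ} {a : Fin d → ℝ} (ha : a ≠ 0) : linearForm a ≠ 0 := fun h0 =>
  ha (dotProduct_self_eq_zero.1 (by rw [← eval_linearForm, h0, map_zero]))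

theorem generically_exists_prime_zeroSet_eq_image {γ : Set (Fin 3 → ℝ)} (hγ : IsCircle γ) :
    Generically fun z => ∀ L : Matrix (Fin 2) (Fin 3) ℝ, L 0 ⨯₃ L 1 = z →
      ∃ e : MvPolynomial (Fin 2) ℝ, Prime e ∧ zeroSet e = L.mulVec '' γ ∧
        ∀ f, L.mulVec '' γ ⊆ zeroSet f → e ∣ f := by
  obtain ⟨c, U, W, ρ, h, rfl⟩ := hγ.exists_frame
  refine ⟨linearForm (U ⨯₃ W), linearForm_ne_zero h.cross_ne_zero, ?_⟩
  rintro _ hz L rfl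
  rw [mulVec_image_ellipse]
  refine exists_prime_zeroSet_eq_ellipse ?_
  rw [eval_linearForm, cross_dot_cross, dotProduct_comm U, dotProduct_comm W, dotProduct_comm U,
    dotProduct_comm W] at hz
  exact mul_comm ((L *ᵥ U) 1) _ ▸ hz

/-- The quadratic form whose zeros are the directions of the lines through `c + w` that meet the
circle with centre `c`, radius `ρ` and normal vector `N`. -/
def coneForm {d : ℕ} (N w : Fin d → ℝ) (ρ : ℝ) : MvPolynomial (Fin d) ℝ :=
  ∑ i, (MvPolynomial.C (w i) * linearForm N - MvPolynomial.C (N ⬝ᵥ w) * MvPolynomial.X i) ^ 2 -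
    MvPolynomial.C (ρ ^ 2) * linearForm N ^ 2

theorem eval_coneForm {d : ℕ} (N w z : Fin d → ℝ) (ρ : ℝ) :
    MvPolynomial.eval z (coneForm N w ρ) =
      ((N ⬝ᵥ z) • w - (N ⬝ᵥ w) • z) ⬝ᵥ ((N ⬝ᵥ z) • w - (N ⬝ᵥ w) • z) - ρ ^ 2 * (N ⬝ᵥ z) ^ 2 := by
  rw [dotProduct]
  simp only [coneForm, map_sub, map_sum, map_pow, map_mul, MvPolynomial.eval_C,
    MvPolynomial.eval_X, eval_linearForm, Pi.sub_apply, Pi.smul_apply, smul_eq_mul, ← sq,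
    mul_comm (N ⬝ᵥ z)]

theorem coneForm_ne_zero {N w : Fin 3 → ℝ} (hN : N ≠ 0) {ρ : ℝ}
    (hw : N ⬝ᵥ w = 0 → w ⬝ᵥ w ≠ ρ ^ 2) : coneForm N w ρ ≠ 0 := by
  suffices ∃ z, MvPolynomial.eval z (coneForm N w ρ) ≠ 0 by
    obtain ⟨z, hz⟩ := this
    exact fun h0 => hz (by rw [h0, map_zero])
  simp only [eval_coneForm]
  by_cases hNw : N ⬝ᵥ w = 0
  · refine ⟨N, ?_⟩
    rw [hNw, zero_smul, sub_zero, smul_dotProduct, dotProduct_smul, smul_eq_mul, smul_eq_mul,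
      ← mul_assoc, ← sq, mul_comm (ρ ^ 2), ← mul_sub]
    exact mul_ne_zero (pow_ne_zero 2 (dotProduct_self_eq_zero.not.2 hN)) (sub_ne_zero.2 (hw hNw))
  · obtain ⟨z, hz, hzN⟩ := exists_dotProduct_eq_zero N
    refine ⟨z, ?_⟩
    rw [dotProduct_comm N z, hzN]
    simpa [hNw] using hz

theorem dotProduct_smul_eq_of_mulVec_eq_zero {L : Matrix (Fin 2) (Fin 3) ℝ} {x : Fin 3 → ℝ}
    (hx : L *ᵥ x = 0) (N : Fin 3 → ℝ) :
    (N ⬝ᵥ L 0 ⨯₃ L 1) • x = (N ⬝ᵥ x) • (L 0 ⨯₃ L 1) := by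
  have h0 : L 0 ⬝ᵥ x = 0 := congrFun hx 0
  have h1 : L 1 ⬝ᵥ x = 0 := congrFun hx 1
  have hcross : x ⨯₃ (L 0 ⨯₃ L 1) = 0 := by
    rw [cross_cross_eq_smul_sub_smul', h0, dotProduct_comm x, h1, zero_smul, zero_smul, sub_zero]
  rw [← sub_eq_zero, dotProduct_comm N x, ← cross_cross_eq_smul_sub_smul', hcross, map_zero]

theorem generically_mulVec_notMem_image {γ : Set (Fin 3 → ℝ)} (hγ : IsCircle γ)
    {p : Fin 3 → ℝ} (hp : p ∉ γ) :
    Generically fun z => ∀ L : Matrix (Fin 2) (Fin 3) ℝ, L 0 ⨯₃ L 1 = z →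
      L *ᵥ p ∉ L.mulVec '' γ := by
  obtain ⟨c, U, W, ρ, h, rfl⟩ := hγ.exists_frame
  set N := U ⨯₃ W
  rw [h.ellipse_eq] at hp ⊢
  refine ⟨coneForm N (p - c) ρ, coneForm_ne_zero h.cross_ne_zero fun h0 hρ => hp ⟨hρ, h0⟩, ?_⟩
  rintro _ hz L rfl ⟨q, ⟨hq, hqN⟩, hLq⟩
  refine hz ?_
  have hray : (N ⬝ᵥ L 0 ⨯₃ L 1) • (p - q) = (N ⬝ᵥ (p - c)) • (L 0 ⨯₃ L 1) := by
    have hNpq : N ⬝ᵥ (p - q) = N ⬝ᵥ (p - c) := by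
      rw [← sub_sub_sub_cancel_right p q c, dotProduct_sub, hqN, sub_zero]
    rw [← hNpq, dotProduct_smul_eq_of_mulVec_eq_zero (by rw [Matrix.mulVec_sub, hLq, sub_self])]
  rw [eval_coneForm, ← hray, ← smul_sub, sub_sub_sub_cancel_left, smul_dotProduct, dotProduct_smul,
    hq, smul_eq_mul, smul_eq_mul]
  ring

theorem exists_generic_projection {C : Finset (Set (Fin 3 → ℝ))} (hC : ∀ γ ∈ C, IsCircle γ) :
    ∃ L : Matrix (Fin 2) (Fin 3) ℝ, ∀ f ≠ 0,
      (C.filter (· ⊆ zeroSet (linearPullback L f))).card ≤ f.totalDegree := by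
  have hprime := Generically.forall_mem fun γ hγ =>
    generically_exists_prime_zeroSet_eq_image (hC γ hγ)
  have himage : ∀ γ ∈ C, ∀ γ' ∈ C, Generically fun z => ∀ L : Matrix (Fin 2) (Fin 3) ℝ,
      L 0 ⨯₃ L 1 = z → γ ≠ γ' → ¬ L.mulVec '' γ ⊆ L.mulVec '' γ' := fun γ hγ γ' hγ' => by
    by_cases hsub : γ ⊆ γ'
    · exact ⟨1, one_ne_zero, fun _ _ _ _ hne =>
        absurd ((hC γ hγ).eq_of_subset (hC γ' hγ') hsub) hne⟩
    · obtain ⟨p, hp, hp'⟩ := Set.not_subset.1 hsub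
      obtain ⟨F, hF, h⟩ := generically_mulVec_notMem_image (hC γ' hγ') hp'
      exact ⟨F, hF, fun z hz L hL _ himg => h z hz L hL (himg (Set.mem_image_of_mem _ hp))⟩
  obtain ⟨z, hprime, himage⟩ := (hprime.and (Generically.forall_mem fun γ hγ =>
    Generically.forall_mem (himage γ hγ))).exists_point
  obtain ⟨u, v, huv⟩ := exists_cross_eq z
  set L : Matrix (Fin 2) (Fin 3) ℝ := Matrix.of ![u, v]
  have hL : L 0 ⨯₃ L 1 = z := huv
  choose! e heprime hezero hedvd using fun γ hγ => hprime γ hγ L hL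
  refine ⟨L, fun f hf => ?_⟩
  have hmem : ∀ γ ∈ C.filter (· ⊆ zeroSet (linearPullback L f)), γ ∈ C :=
    fun γ => (Finset.filter_subset _ _ ·)
  refine card_le_totalDegree_of_prime_dvd (e := e) hf (fun γ hγ => heprime γ (hmem γ hγ))
    (fun γ hγ γ' hγ' hne hdvd => ?_) fun γ hγ => ?_
  · have hsub := zeroSet_subset_of_dvd hdvd
    rw [hezero γ (hmem γ hγ), hezero γ' (hmem γ' hγ')] at hsub
    exact himage γ (hmem γ hγ) γ' (hmem γ' hγ') L hL hne hsub
  · rw [Finset.mem_filter, ← mulVec_preimage_zeroSet, ← Set.image_subset_iff] at hγ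
    exact hedvd γ hγ.1 f hγ.2

/-! ### The recursion over cells -/

/-- A division of the incidence problem for `P` and `C` into `t ^ k` subproblems indexed by `ι`,
together with a residual subproblem, as produced by partitioning `ℝ^k` with a polynomial of degree
`O(t)`. The constant implied in all the estimates is `K`. -/
structure CellDecomposition (ι : Type*) [Fintype ι] (K t : ℝ) (k : ℕ) {d : ℕ}
    (P : Finset (Fin d → ℝ)) (C : Finset (Set (Fin d → ℝ))) where
  points : ι → Finset (Fin d → ℝ)
  curves : ι → Finset (Set (Fin d → ℝ))
  residualPoints : Finset (Fin d → ℝ)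
  residualCurves : Finset (Set (Fin d → ℝ))
  card_index : (Fintype.card ι : ℝ) = t ^ k
  mul_card_points_le : ∀ s, t ^ k * (points s).card ≤ P.card
  sum_card_points_add_le : ∑ s, ((points s).card : ℝ) + residualPoints.card ≤ P.card
  curves_subset : ∀ s, curves s ⊆ C
  sum_card_curves_le : ∑ s, ((curves s).card : ℝ) ≤ K * t * C.card
  incidences_le : (Incidences P C : ℝ) ≤ ∑ s, (Incidences (points s) (curves s) : ℝ) +
    Incidences residualPoints residualCurves + K * t * C.card

/-- The exponents `a`, `b` for which Hölder's inequality bounds the sum of `x ^ a * y ^ b` over the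
cells of a `CellDecomposition` by a constant times `m ^ a * n ^ b`, where `m` and `n` are the
numbers of points and curves. -/
structure IsBalanced (k : ℕ) (a b : ℝ) : Prop where
  nonneg : 0 ≤ a
  pos : 0 < b
  le_one : b ≤ 1
  mul_eq : k * a = k * (1 - b) + b

/-- The right-hand side of the incidence bounds for `m` points and `n` curves, up to a constant
factor; `Q` is the weight of the second term. -/
def incidenceBound (a b Q a' b' m n : ℝ) : ℝ :=
  m ^ a * n ^ b + Q * (m ^ a' * n ^ b') + m + n

theorem sum_rpow_le_card_rpow_mul {ι : Type*} [Fintype ι] {y : ι → ℝ} (hy : ∀ s, 0 ≤ y s)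
    {b : ℝ} (hb : 0 < b) (hb1 : b ≤ 1) :
    ∑ s, y s ^ b ≤ (Fintype.card ι : ℝ) ^ (1 - b) * (∑ s, y s) ^ b := by
  have hsum : 0 ≤ ∑ s, y s ^ b := Finset.sum_nonneg fun s _ => Real.rpow_nonneg (hy s) _
  have hpow := Real.rpow_sum_le_const_mul_sum_rpow Finset.univ (fun s => y s ^ b)
    ((one_le_div hb).2 hb1)
  simp only [abs_of_nonneg (Real.rpow_nonneg (hy _) _), ← Real.rpow_mul (hy _),
    mul_one_div_cancel hb.ne', Real.rpow_one, Finset.card_univ] at hpow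
  have hroot := Real.rpow_le_rpow (by positivity) hpow hb.le
  rwa [← Real.rpow_mul hsum, one_div_mul_cancel hb.ne', Real.rpow_one,
    Real.mul_rpow (by positivity) (Finset.sum_nonneg fun s _ => hy s),
    ← Real.rpow_mul (by positivity), sub_mul, one_div_mul_cancel hb.ne', one_mul] at hroot

theorem sum_rpow_mul_rpow_le {ι : Type*} [Fintype ι] {x y : ι → ℝ} {X Y a b : ℝ}
    (hx : ∀ s, 0 ≤ x s) (hxX : ∀ s, x s ≤ X) (hy : ∀ s, 0 ≤ y s) (hyY : ∑ s, y s ≤ Y)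
    (hX : 0 ≤ X) (ha : 0 ≤ a) (hb : 0 < b) (hb1 : b ≤ 1) :
    ∑ s, x s ^ a * y s ^ b ≤ X ^ a * ((Fintype.card ι : ℝ) ^ (1 - b) * Y ^ b) := by
  have hsum : 0 ≤ ∑ s, y s := Finset.sum_nonneg fun s _ => hy s
  calc ∑ s, x s ^ a * y s ^ b ≤ ∑ s, X ^ a * y s ^ b := by
        gcongr with s
        exacts [Real.rpow_nonneg (hy s) _, hx s, hxX s]
    _ = X ^ a * ∑ s, y s ^ b := (Finset.mul_sum _ _ _).symm
    _ ≤ X ^ a * ((Fintype.card ι : ℝ) ^ (1 - b) * Y ^ b) := by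
        gcongr
        exact (sum_rpow_le_card_rpow_mul hy hb hb1).trans (by gcongr)

/-- The factor `t ^ (-(k * ε))` is the gain per step of the recursion. -/
theorem IsBalanced.rescale {k : ℕ} {a b : ℝ} (h : IsBalanced k a b) {K t m n ε : ℝ} (hK : 0 ≤ K)
    (ht : 0 < t) (hm : 0 ≤ m) (hn : 0 ≤ n) :
    (m / t ^ k) ^ (a + ε) * ((t ^ k) ^ (1 - b) * (K * t * n) ^ b) =
      K ^ b * t ^ (-(k * ε)) * (m ^ (a + ε) * n ^ b) := by
  have hexp : t ^ (-(k * ε)) = t ^ (k * (1 - b)) * t ^ b / t ^ (k * (a + ε)) := by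
    rw [← Real.rpow_add ht, ← Real.rpow_sub ht, ← h.mul_eq]
    ring_nf
  rw [Real.div_rpow hm (by positivity), Real.mul_rpow (by positivity) hn, Real.mul_rpow hK ht.le,
    ← Real.rpow_natCast, ← Real.rpow_mul ht.le, ← Real.rpow_mul ht.le, hexp]
  ring

theorem mul_le_rpow_mul_rpow {m n κ a b : ℝ} {r : ℕ} (hm : 1 ≤ m) (hn : 0 ≤ n) (hκ : 0 ≤ κ)
    (hb : 0 < b) (hb1 : b < 1) (hra : r * (1 - b) ≤ a) (h : κ ^ (1 / (1 - b)) * n ≤ m ^ r) :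
    κ * n ≤ m ^ a * n ^ b := by
  obtain rfl | hn := hn.eq_or_lt
  · simp [Real.zero_rpow hb.ne']
  have hroot := Real.rpow_le_rpow (by positivity) h (sub_nonneg.2 hb1.le)
  rw [Real.mul_rpow (by positivity) hn.le, ← Real.rpow_mul hκ,
    one_div_mul_cancel (sub_pos.2 hb1).ne', Real.rpow_one, ← Real.rpow_natCast,
    ← Real.rpow_mul (by positivity)] at hroot
  calc κ * n = κ * n ^ (1 - b) * n ^ b := by
        rw [mul_assoc, ← Real.rpow_add hn, sub_add_cancel, Real.rpow_one]
    _ ≤ m ^ ((r : ℝ) * (1 - b)) * n ^ b := by gcongr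
    _ ≤ m ^ a * n ^ b := by gcongr

namespace CellDecomposition

variable {ι : Type*} [Fintype ι] {K t : ℝ} {k d : ℕ} {P : Finset (Fin d → ℝ)}
  {C : Finset (Set (Fin d → ℝ))}

theorem sum_card_rpow_mul_card_rpow_le (D : CellDecomposition ι K t k P C) {a b ε : ℝ}
    (h : IsBalanced k a b) (hε : 0 ≤ ε) (hK : 1 ≤ K) (ht : 0 < t)
    (hgain : K * t ^ (-(k * ε)) ≤ 1 / 2) :
    ∑ s, ((D.points s).card : ℝ) ^ (a + ε) * ((D.curves s).card : ℝ) ^ b ≤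
      1 / 2 * ((P.card : ℝ) ^ (a + ε) * (C.card : ℝ) ^ b) := by
  have hpoints : ∀ s, ((D.points s).card : ℝ) ≤ P.card / t ^ k := fun s =>
    (le_div_iff₀' (by positivity)).2 (D.mul_card_points_le s)
  calc _ ≤ ((P.card : ℝ) / t ^ k) ^ (a + ε) * ((t ^ k) ^ (1 - b) * (K * t * C.card) ^ b) := by
        rw [← D.card_index]
        rw [← D.card_index] at hpoints
        exact sum_rpow_mul_rpow_le (fun s => by positivity) hpoints
          (fun s => by positivity) D.sum_card_curves_le (by positivity)
          (add_nonneg h.nonneg hε) h.pos h.le_one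
    _ = K ^ b * t ^ (-(k * ε)) * ((P.card : ℝ) ^ (a + ε) * (C.card : ℝ) ^ b) :=
        h.rescale (by positivity) ht (by positivity) (by positivity)
    _ ≤ 1 / 2 * ((P.card : ℝ) ^ (a + ε) * (C.card : ℝ) ^ b) := by
        gcongr
        refine le_trans ?_ hgain
        gcongr
        exact Real.rpow_le_self_of_one_le hK h.le_one

theorem incidences_le_of_forall_le (D : CellDecomposition ι K t k P C) {a b a' b' Q ε α : ℝ}
    (h : IsBalanced k a b) (h' : IsBalanced k a' b') (hQ : 0 ≤ Q) (hε : 0 ≤ ε) (hK : 1 ≤ K)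
    (ht : 0 < t) (hgain : K * t ^ (-(k * ε)) ≤ 1 / 2) (hα : 1 ≤ α)
    (hfew : 4 * K * t * C.card ≤ (P.card : ℝ) ^ (a + ε) * (C.card : ℝ) ^ b)
    (hresidual : (Incidences D.residualPoints D.residualCurves : ℝ) ≤
      α / 2 * (Q * ((P.card : ℝ) ^ (a' + ε) * (C.card : ℝ) ^ b') +
        D.residualPoints.card + C.card))
    (hcells : ∀ s, (Incidences (D.points s) (D.curves s) : ℝ) ≤
      α * incidenceBound (a + ε) b Q (a' + ε) b' (D.points s).card (D.curves s).card) :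
    (Incidences P C : ℝ) ≤ α * incidenceBound (a + ε) b Q (a' + ε) b' P.card C.card := by
  have hmain := D.sum_card_rpow_mul_card_rpow_le h hε hK ht hgain
  have hsecond := mul_le_mul_of_nonneg_left (D.sum_card_rpow_mul_card_rpow_le h' hε hK ht hgain) hQ
  have hsum := Finset.sum_le_sum fun s (_ : s ∈ Finset.univ) => hcells s
  simp only [incidenceBound, ← Finset.mul_sum, Finset.sum_add_distrib] at hsum
  rw [incidenceBound]
  set X := (P.card : ℝ) ^ (a + ε) * (C.card : ℝ) ^ b
  set Y := (P.card : ℝ) ^ (a' + ε) * (C.card : ℝ) ^ b'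
  have hcurves := D.sum_card_curves_le
  have hpoints := D.sum_card_points_add_le
  have hoverhead : K * t * C.card ≤ α * (K * t * C.card) :=
    le_mul_of_one_le_left (by positivity) hα
  calc (Incidences P C : ℝ)
      ≤ α * (1 / 2 * X + Q * (1 / 2 * Y) + ∑ s, ((D.points s).card : ℝ) + K * t * C.card) +
        α / 2 * (Q * Y + D.residualPoints.card + C.card) + α * (K * t * C.card) := by
        refine D.incidences_le.trans ?_
        gcongr
        refine hsum.trans ?_
        gcongr
    _ = α * (1 / 2 * X + Q * Y + ∑ s, ((D.points s).card : ℝ) +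
          (D.residualPoints.card + C.card) / 2 + 2 * (K * t * C.card)) := by ring
    _ ≤ α * (X + Q * Y + P.card + C.card) := by
        gcongr ?_ * ?_
        linarith [(Nat.cast_nonneg D.residualPoints.card : (0 : ℝ) ≤ _),
          (Nat.cast_nonneg C.card : (0 : ℝ) ≤ _)]

theorem card_points_lt (D : CellDecomposition ι K t k P C) (ht : 2 ≤ t) (hk : 0 < k)
    (hP : 0 < P.card) (s : ι) : (D.points s).card < P.card := by
  have htk : 2 ≤ t ^ k := ht.trans (le_self_pow₀ (by linarith) hk.ne')
  have hle : 2 * ((D.points s).card : ℝ) ≤ P.card :=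
    (mul_le_mul_of_nonneg_right htk (by positivity)).trans (D.mul_card_points_le s)
  have : 2 * (D.points s).card ≤ P.card := by exact_mod_cast hle
  omega

end CellDecomposition

theorem exists_incidences_le_of_cellDecomposition {ι : Type*} [Fintype ι] {k d r : ℕ}
    {K t L A ε a b a' b' : ℝ} (hk : 0 < k) (hK : 1 ≤ K) (ht : 2 ≤ t) (hL : 0 ≤ L) (hA : 0 ≤ A)
    (hε : 0 ≤ ε) (h : IsBalanced k a b) (h' : IsBalanced k a' b') (hb1 : b < 1)
    (hra : r * (1 - b) ≤ a) (hgain : K * t ^ (-(k * ε)) ≤ 1 / 2) :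
    ∃ α : ℝ, 0 < α ∧ ∀ (Q : ℝ) (H : Finset (Set (Fin d → ℝ)) → Prop), 0 ≤ Q →
      (∀ C' C, C' ⊆ C → H C → H C') →
      (∀ P C, H C → (Incidences P C : ℝ) ≤ A * C.card + (P.card : ℝ) ^ r) →
      (∀ P C, H C → ∃ D : CellDecomposition ι K t k P C,
        (Incidences D.residualPoints D.residualCurves : ℝ) ≤
          L * (Q * ((P.card : ℝ) ^ (a' + ε) * (C.card : ℝ) ^ b') +
            D.residualPoints.card + C.card)) →
      ∀ P C, H C →
        (Incidences P C : ℝ) ≤ α * incidenceBound (a + ε) b Q (a' + ε) b' P.card C.card := by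
  set E : ℝ := (4 * K * t) ^ (1 / (1 - b))
  refine ⟨1 + A + E + 2 * L, by positivity, fun Q H hQ hH htrivial hdecomp P C hC => ?_⟩
  set α := 1 + A + E + 2 * L
  induction hm : P.card using Nat.strong_induction_on generalizing P C with
  | _ m ih =>
    subst hm
    obtain hP | hP := P.card.eq_zero_or_pos
    · have h0 : Incidences P C = 0 := by simpa [hP] using incidences_le_mul P C
      rw [h0, incidenceBound, Nat.cast_zero]
      positivity
    obtain hfew | hmany := le_total (E * C.card) ((P.card : ℝ) ^ r)
    · obtain ⟨D, hD⟩ := hdecomp P C hC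
      refine D.incidences_le_of_forall_le h h' hQ hε hK (by positivity) hgain
        (by simp only [α]; linarith [show 0 ≤ E by positivity]) ?_ (hD.trans ?_) fun s =>
          ih _ (D.card_points_lt ht hk hP s) _ _ (hH _ _ (D.curves_subset s) hC) rfl
      · exact mul_le_rpow_mul_rpow (by exact_mod_cast hP) (by positivity) (by positivity) h.pos hb1
          (by linarith) hfew
      · gcongr
        simp only [α]
        linarith [show 0 ≤ E by positivity]
    · calc (Incidences P C : ℝ) ≤ (A + E) * C.card := by linarith [htrivial P C hC]
        _ ≤ α * C.card := by
          gcongr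
          simp only [α]
          linarith
        _ ≤ α * incidenceBound (a + ε) b Q (a' + ε) b' P.card C.card := by
          rw [incidenceBound]
          gcongr
          exact le_add_of_nonneg_left (by positivity)

/-! ### Incidences of circles -/

theorem IsCircle.encard_inter_zeroSet_le {γ : Set (Fin 3 → ℝ)} (hγ : IsCircle γ)
    {f : MvPolynomial (Fin 3) ℝ} (hf : ¬ γ ⊆ zeroSet f) :
    (γ ∩ zeroSet f).encard ≤ (2 * f.totalDegree : ℕ) := by
  obtain ⟨c, U, W, ρ, -, rfl⟩ := hγ.exists_frame
  exact encard_ellipse_inter_zeroSet_le hf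

theorem IsCircle.card_signCell_le {γ : Set (Fin 3 → ℝ)} (hγ : IsCircle γ) {ι : Type*} [Fintype ι]
    [DecidableEq ι] (g : ι → MvPolynomial (Fin 3) ℝ) :
    (Finset.univ.filter fun s => (γ ∩ signCell g s).Nonempty).card ≤
      2 * (∏ j, g j).totalDegree + 1 := by
  by_cases hg : γ ⊆ zeroSet (∏ j, g j)
  · rw [Finset.filter_false_of_mem, Finset.card_empty]
    · exact Nat.zero_le _
    rintro s - ⟨x, hx, hxs⟩
    obtain ⟨j, -, hj⟩ := Finset.prod_eq_zero_iff.1 ((map_prod _ _ _).symm.trans (hg hx))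
    simpa [hj] using hxs j
  · obtain ⟨c, U, W, ρ, -, rfl⟩ := hγ.exists_frame
    exact card_signCell_ellipse_le hg

theorem incidences_circles_le {P : Finset (Fin 3 → ℝ)} {C : Finset (Set (Fin 3 → ℝ))}
    (hC : ∀ γ ∈ C, IsCircle γ) : (Incidences P C : ℝ) ≤ 2 * C.card + (P.card : ℝ) ^ 3 := by
  have hthree : ∀ T : Finset (Fin 3 → ℝ), T.card = 2 + 1 →
      (C.filter fun γ => ∀ p ∈ T, p ∈ γ).card ≤ 1 := by
    refine fun T hT => Finset.card_le_one.2 fun γ hγ γ' hγ' => ?_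
    rw [Finset.mem_filter] at hγ hγ'
    have hsub : (T : Set (Fin 3 → ℝ)) ⊆ γ ∩ γ' := fun p hp => ⟨hγ.2 p hp, hγ'.2 p hp⟩
    have hcard := Set.encard_le_encard hsub
    rw [Set.encard_coe_eq_coe_finsetCard, hT] at hcard
    exact (hC γ hγ.1).eq_of_two_lt_encard_inter (hC γ' hγ'.1)
      (lt_of_lt_of_le (by norm_num) hcard)
  have := incidences_le_add_pow (P := P) hthree
  rw [one_mul] at this
  exact_mod_cast this

/-- The subdivision of an incidence problem for circles by the sign cells of polynomials `g`; the
residual problem is the one on the zero set of their product. -/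
def circleCellDecomposition {k M : ℕ} {P : Finset (Fin 3 → ℝ)} {C : Finset (Set (Fin 3 → ℝ))}
    (hC : ∀ γ ∈ C, IsCircle γ) (g : Fin (k * M) → MvPolynomial (Fin 3) ℝ)
    (hdeg : (∏ j, g j).totalDegree ≤ 2 * k ^ 2 * 2 ^ M)
    (hcell : ∀ s, (P.filter (· ∈ signCell g s)).card * 2 ^ (k * M) ≤ P.card) :
    CellDecomposition (Fin (k * M) → ℤˣ) (4 * k ^ 2 + 1) (2 ^ M) k P C where
  points s := P.filter (· ∈ signCell g s)
  curves s := C.filter fun γ => (γ ∩ signCell g s).Nonempty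
  residualPoints := P.filter (· ∈ zeroSet (∏ j, g j))
  residualCurves := C.filter (· ⊆ zeroSet (∏ j, g j))
  card_index := by simp [← pow_mul, mul_comm]
  mul_card_points_le s := by
    rw [← pow_mul, mul_comm, mul_comm M]
    exact_mod_cast hcell s
  sum_card_points_add_le := by exact_mod_cast (sum_card_filter_mem_signCell P g).le
  curves_subset s := Finset.filter_subset _ _
  sum_card_curves_le := by
    have hcount := sum_card_filter_inter_signCell_le g fun γ hγ => (hC γ hγ).card_signCell_le g
    have hB : 2 * (∏ j, g j).totalDegree + 1 ≤ (4 * k ^ 2 + 1) * 2 ^ M := by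
      linarith [Nat.one_le_two_pow (n := M)]
    exact_mod_cast hcount.trans (Nat.mul_le_mul_right _ hB)
  incidences_le := by
    have hcells : ∀ s, Incidences (P.filter (· ∈ signCell g s)) C =
        Incidences (P.filter (· ∈ signCell g s))
          (C.filter fun γ => (γ ∩ signCell g s).Nonempty) := fun s =>
      (incidences_filter_right fun γ _ p hp hpγ => ⟨p, hpγ, (Finset.mem_filter.1 hp).2⟩).symm
    have hzero := incidences_zeroSet_le P fun γ hγ hg =>
      (hC γ hγ).encard_inter_zeroSet_le (f := ∏ j, g j) hg
    have hB : 2 * (∏ j, g j).totalDegree ≤ (4 * k ^ 2 + 1) * 2 ^ M := by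
      linarith [Nat.zero_le (2 ^ M)]
    have htotal := incidences_eq_sum_signCell_add P C g
    simp only [hcells] at htotal
    have := htotal.trans_le (Nat.add_le_add_left
      (hzero.trans (Nat.add_le_add_left (Nat.mul_le_mul_right _ hB) _)) _)
    rw [← add_assoc] at this
    exact_mod_cast this

theorem exists_cellDecomposition {k : ℕ} (hk : 0 < k) (L : Matrix (Fin k) (Fin 3) ℝ)
    (P : Finset (Fin 3 → ℝ)) {C : Finset (Set (Fin 3 → ℝ))} (hC : ∀ γ ∈ C, IsCircle γ) (M : ℕ) :
    ∃ f : MvPolynomial (Fin k) ℝ, f ≠ 0 ∧ f.totalDegree ≤ 2 * k ^ 2 * 2 ^ M ∧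
      ∃ D : CellDecomposition (Fin (k * M) → ℤˣ) (4 * k ^ 2 + 1) (2 ^ M) k P C,
        D.residualCurves = C.filter (· ⊆ zeroSet (linearPullback L f)) := by
  obtain ⟨g, hg, hdeg, hcell⟩ := exists_partition hk L.mulVec P M
  have hf : (∏ j, g j).totalDegree ≤ 2 * k ^ 2 * 2 ^ M :=
    (MvPolynomial.totalDegree_finsetProd _ _).trans hdeg
  have hprod : linearPullback L (∏ j, g j) = ∏ j, linearPullback L (g j) := map_prod _ _ _
  have hmem : ∀ s x, x ∈ signCell (fun j => linearPullback L (g j)) s ↔ L.mulVec x ∈ signCell g s :=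
    fun s x => by simp [signCell, eval_linearPullback]
  refine ⟨∏ j, g j, Finset.prod_ne_zero_iff.2 fun j _ => hg j, hf, circleCellDecomposition hC
    (fun j => linearPullback L (g j)) ?_ fun s => ?_, ?_⟩
  · rw [← hprod]
    exact (totalDegree_linearPullback_le L _).trans hf
  · simpa only [hmem] using hcell s
  · exact congrArg (fun p => C.filter (· ⊆ zeroSet p)) hprod.symm

theorem exists_two_pow_mul_rpow_neg_le (K : ℝ) {e : ℝ} (he : 0 < e) :
    ∃ M : ℕ, 2 ≤ (2 : ℝ) ^ M ∧ K * ((2 : ℝ) ^ M) ^ (-e) ≤ 1 / 2 := by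
  have hpow : Filter.Tendsto (fun M : ℕ => (2 : ℝ) ^ M) Filter.atTop Filter.atTop :=
    tendsto_pow_atTop_atTop_of_one_lt one_lt_two
  have hgain : Filter.Tendsto (fun M : ℕ => K * ((2 : ℝ) ^ M) ^ (-e)) Filter.atTop (nhds 0) := by
    simpa using ((tendsto_rpow_neg_atTop he).comp hpow).const_mul K
  exact ((hpow.eventually_ge_atTop 2).and (hgain.eventually_le_const (by norm_num))).exists

theorem exists_planar_incidences_le {ε : ℝ} (hε : 0 < ε) :
    ∃ α : ℝ, 0 < α ∧ ∀ (P : Finset (Fin 3 → ℝ)) (C : Finset (Set (Fin 3 → ℝ))),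
      (∀ γ ∈ C, IsCircle γ) → (Incidences P C : ℝ) ≤
        α * ((P.card : ℝ) ^ ((3 : ℝ) / 5 + ε) * (C.card : ℝ) ^ ((4 : ℝ) / 5) +
          P.card + C.card) := by
  obtain ⟨M, hM, hgain⟩ := exists_two_pow_mul_rpow_neg_le (4 * (2 : ℕ) ^ 2 + 1)
    (show 0 < ((2 : ℕ) : ℝ) * ε by positivity)
  have hbalanced : IsBalanced 2 (3 / 5) (4 / 5) := by constructor <;> norm_num
  obtain ⟨α, hα, hrec⟩ := exists_incidences_le_of_cellDecomposition (ι := Fin (2 * M) → ℤˣ)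
    (d := 3) (r := 3) (L := 8 * 2 ^ M) two_pos (by norm_num) hM (by positivity)
    (zero_le_two (α := ℝ)) hε.le hbalanced hbalanced (by norm_num) (by norm_num) hgain
  refine ⟨α, hα, fun P C hC => ?_⟩
  have := hrec 0 (fun C => ∀ γ ∈ C, IsCircle γ) le_rfl
    (fun _ _ hsub hC γ hγ => hC γ (hsub hγ)) (fun P C => incidences_circles_le)
    (fun P C hC => ?_) P C hC
  · simpa [incidenceBound] using this
  obtain ⟨L, hL⟩ := exists_generic_projection hC
  obtain ⟨f, hf, hdeg, D, hD⟩ := exists_cellDecomposition two_pos L P hC M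
  refine ⟨D, ?_⟩
  have hcurves : D.residualCurves.card ≤ 8 * 2 ^ M := by
    rw [hD]
    exact (hL f hf).trans hdeg
  have hinc : (Incidences D.residualPoints D.residualCurves : ℝ) ≤
      D.residualPoints.card * (8 * 2 ^ M) := by
    exact_mod_cast (incidences_le_mul _ _).trans (Nat.mul_le_mul_left _ hcurves)
  refine hinc.trans ?_
  rw [zero_mul, zero_add, mul_comm]
  gcongr
  exact le_add_of_nonneg_right (by positivity)

theorem rpow_add_le_rpow_mul_rpow {x n q a b : ℝ} (hx : 0 ≤ x) (hxn : x ≤ n) (hxq : x ≤ q)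
    (ha : 0 ≤ a) (hb : 0 ≤ b) : x ^ (a + b) ≤ n ^ a * q ^ b := by
  rw [Real.rpow_add_of_nonneg hx ha hb]
  gcongr
  exact Real.rpow_nonneg (hx.trans hxn) _

/-- Families of circles of which at most `q` lie on any one surface of degree at most `c`. -/
def IsCircleFamily (c q : ℕ) (C : Finset (Set (Fin 3 → ℝ))) : Prop :=
  (∀ γ ∈ C, IsCircle γ) ∧ ∀ f : MvPolynomial (Fin 3) ℝ, f ≠ 0 → f.totalDegree ≤ c →
    (C.filter fun γ => γ ⊆ zeroSet f).card ≤ q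

theorem IsCircleFamily.mono {c q : ℕ} {C C' : Finset (Set (Fin 3 → ℝ))} (hsub : C' ⊆ C)
    (hC : IsCircleFamily c q C) : IsCircleFamily c q C' :=
  ⟨fun γ hγ => hC.1 γ (hsub hγ), fun f hf hdeg =>
    (Finset.card_le_card (Finset.filter_subset_filter _ hsub)).trans (hC.2 f hf hdeg)⟩

theorem IsCircleFamily.exists_cellDecomposition {M q : ℕ} {C : Finset (Set (Fin 3 → ℝ))}
    (hC : IsCircleFamily (2 * 3 ^ 2 * 2 ^ M) q C) (P : Finset (Fin 3 → ℝ)) :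
    ∃ D : CellDecomposition (Fin (3 * M) → ℤˣ) (4 * (3 : ℕ) ^ 2 + 1) (2 ^ M) 3 P C,
      (∀ γ ∈ D.residualCurves, IsCircle γ) ∧ D.residualCurves.card ≤ q ∧
        D.residualCurves.card ≤ C.card ∧ D.residualPoints.card ≤ P.card := by
  obtain ⟨f, hf, hdeg, D, hD⟩ := _root_.exists_cellDecomposition three_pos 1 P hC.1 M
  have hid : (1 : Matrix (Fin 3) (Fin 3) ℝ).mulVec = id := funext Matrix.one_mulVec
  rw [← mulVec_preimage_zeroSet, hid, Set.preimage_id] at hD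
  refine ⟨D, ?_, ?_, ?_, ?_⟩
  · exact fun γ hγ => hC.1 γ (Finset.mem_of_mem_filter γ (hD ▸ hγ))
  · exact hD ▸ hC.2 f hf hdeg
  · exact hD ▸ Finset.card_filter_le _ _
  · have hcells : (0 : ℝ) ≤ ∑ s, ((D.points s).card : ℝ) := by positivity
    exact_mod_cast (le_add_of_nonneg_left hcells).trans D.sum_card_points_add_le

theorem IsCircleFamily.exists_cellDecomposition_residual_le {ε : ℝ} (hε : 0 < ε) :
    ∃ β : ℝ, 0 < β ∧ ∀ {M q : ℕ} {C : Finset (Set (Fin 3 → ℝ))},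
      IsCircleFamily (2 * 3 ^ 2 * 2 ^ M) q C → ∀ P : Finset (Fin 3 → ℝ),
      ∃ D : CellDecomposition (Fin (3 * M) → ℤˣ) (4 * (3 : ℕ) ^ 2 + 1) (2 ^ M) 3 P C,
        (Incidences D.residualPoints D.residualCurves : ℝ) ≤
          β * ((q : ℝ) ^ ((1 : ℝ) / 5) * ((P.card : ℝ) ^ ((3 : ℝ) / 5 + ε) *
            (C.card : ℝ) ^ ((3 : ℝ) / 5)) + D.residualPoints.card + C.card) := by
  obtain ⟨β, hβ, hplanar⟩ := exists_planar_incidences_le hε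
  refine ⟨β, hβ, fun {M q C} hC P => ?_⟩
  obtain ⟨D, hcircle, hq, hn, hm⟩ := hC.exists_cellDecomposition P
  refine ⟨D, (hplanar _ _ hcircle).trans ?_⟩
  have hcurves : (D.residualCurves.card : ℝ) ^ ((4 : ℝ) / 5) ≤
      (C.card : ℝ) ^ ((3 : ℝ) / 5) * (q : ℝ) ^ ((1 : ℝ) / 5) := by
    rw [show (4 : ℝ) / 5 = 3 / 5 + 1 / 5 by norm_num]
    exact rpow_add_le_rpow_mul_rpow (by positivity) (by exact_mod_cast hn) (by exact_mod_cast hq)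
      (by norm_num) (by norm_num)
  calc β * ((D.residualPoints.card : ℝ) ^ ((3 : ℝ) / 5 + ε) *
          (D.residualCurves.card : ℝ) ^ ((4 : ℝ) / 5) +
          D.residualPoints.card + D.residualCurves.card)
      ≤ β * ((P.card : ℝ) ^ ((3 : ℝ) / 5 + ε) *
          ((C.card : ℝ) ^ ((3 : ℝ) / 5) * (q : ℝ) ^ ((1 : ℝ) / 5)) +
          D.residualPoints.card + C.card) := by gcongr
    _ = _ := by ring

/-- **Circles in `ℝ³` (the case `k = 3` of the main three-dimensional theorem).**
For each `ε > 0` there is a constant `c(ε)` such that the following holds, with a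
constant `α` depending only on `ε`. If `P` is a set of `m` distinct points and `C`
a set of `n` distinct circles in `ℝ³` such that every algebraic surface of degree
at most `c(ε)` contains at most `q₂` circles of `C`, then
`I(P,C) ≤ α (m^{3/7+ε} n^{6/7} + m^{3/5+ε} n^{3/5} q₂^{1/5} + m + n)`. -/
theorem circles_in_R3 (ε : ℝ) (hε : 0 < ε) :
    ∃ c : ℕ, ∃ α : ℝ, 0 < α ∧
      ∀ (P : Finset (Fin 3 → ℝ)) (C : Finset (Set (Fin 3 → ℝ))) (q₂ : ℕ),
        (∀ γ ∈ C, IsCircle γ) →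
        (∀ f : MvPolynomial (Fin 3) ℝ, f ≠ 0 → f.totalDegree ≤ c →
            (C.filter fun γ => γ ⊆ zeroSet f).card ≤ q₂) →
        (Incidences P C : ℝ) ≤
          α * ((P.card : ℝ) ^ ((3 : ℝ) / 7 + ε) * (C.card : ℝ) ^ ((6 : ℝ) / 7)
                + (P.card : ℝ) ^ ((3 : ℝ) / 5 + ε) * (C.card : ℝ) ^ ((3 : ℝ) / 5)
                    * (q₂ : ℝ) ^ ((1 : ℝ) / 5)
                + (P.card : ℝ) + (C.card : ℝ)) := by
  obtain ⟨β, hβ, hresidual⟩ := IsCircleFamily.exists_cellDecomposition_residual_le hε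
  obtain ⟨M, hM, hgain⟩ := exists_two_pow_mul_rpow_neg_le (4 * (3 : ℕ) ^ 2 + 1)
    (show 0 < ((3 : ℕ) : ℝ) * ε by positivity)
  have hbalanced : IsBalanced 3 (3 / 7) (6 / 7) := by constructor <;> norm_num
  have hbalanced' : IsBalanced 3 (3 / 5) (3 / 5) := by constructor <;> norm_num
  obtain ⟨α, hα, hrec⟩ := exists_incidences_le_of_cellDecomposition (ι := Fin (3 * M) → ℤˣ)
    (d := 3) (r := 3) three_pos (by norm_num) hM hβ.le (zero_le_two (α := ℝ)) hε.le hbalanced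
    hbalanced' (by norm_num) (by norm_num) hgain
  refine ⟨2 * 3 ^ 2 * 2 ^ M, α, hα, fun P C q₂ hC hq => ?_⟩
  have hbound := hrec ((q₂ : ℝ) ^ ((1 : ℝ) / 5)) (IsCircleFamily _ q₂) (by positivity)
    (fun _ _ => IsCircleFamily.mono) (fun _ _ hC => incidences_circles_le hC.1)
    (fun P _ hC => hresidual hC P) P C ⟨hC, hq⟩
  rwa [incidenceBound, mul_comm ((q₂ : ℝ) ^ ((1 : ℝ) / 5))] at hbound
end
end

section
/- Let d ≥ 3 and k ≥ 2 be integers and let j be an integer with 2 ≤ j ≤ d−1. Let n, q_{d−1}, q_j be positive reals with q_j ≤ q_{d−1} ≤ n, and suppose that q_j ≥ (q_{d−1}/n)^{d(d−2)}·q_{d−1}. Then q_{d−1}^{(d−1)(j−1)(k−1)/((d−2)(jk−j+1))} · q_j^{(d−j−1)(k−1)/((d−2)(jk−j+1))} ≤ n^{d(j−1)(k−1)/((d−1)(jk−j+1))} · q_j^{(d−j)(k−1)/((d−1)(jk−j+1))}. -/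
/-!
Write `q` and `r` for `q_{d-1}` and `q_j`. Since `d (d - 2) + 1 = (d - 1) ^ 2`, the hypothesis
`(q / n) ^ (d (d - 2)) * q ≤ r` says `q ^ ((d - 1) ^ 2) ≤ n ^ (d (d - 2)) * r`. Raising this to
the power `c = (j - 1) (k - 1) / ((d - 1) (d - 2) (j k - j + 1))` produces the required powers of
`q` and `n` and a factor `r ^ c`. This factor is exactly the discrepancy between the powers of `r`
on the two sides, by the partial fraction identity
`(j - 1) / ((d - 1) (d - 2)) + (d - j - 1) / (d - 2) = (d - j) / (d - 1)`.
-/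

theorem div_rpow_mul_self_le_iff {n q r s : ℝ} (hn : 0 < n) (hq : 0 < q) :
    (q / n) ^ s * q ≤ r ↔ q ^ (s + 1) ≤ n ^ s * r := by
  rw [Real.div_rpow hq.le hn.le, div_mul_eq_mul_div, ← Real.rpow_add_one hq.ne',
    div_le_iff₀' (Real.rpow_pos_of_pos hn s)]

theorem rpow_mul_rpow_le_of_rpow_le_rpow_mul {n q r a b c : ℝ} (hn : 0 ≤ n) (hq : 0 ≤ q)
    (hr : 0 < r) (hc : 0 ≤ c) (h : q ^ a ≤ n ^ b * r) (e : ℝ) :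
    q ^ (a * c) * r ^ e ≤ n ^ (b * c) * r ^ (c + e) :=
  calc
    q ^ (a * c) * r ^ e = (q ^ a) ^ c * r ^ e := by rw [Real.rpow_mul hq]
    _ ≤ (n ^ b * r) ^ c * r ^ e := by gcongr
    _ = n ^ (b * c) * r ^ (c + e) := by
      rw [Real.mul_rpow (Real.rpow_nonneg hn b) hr.le, ← Real.rpow_mul hn, mul_assoc,
        ← Real.rpow_add hr]

theorem sub_one_div_add_sub_sub_one_div {K : Type*} [Field K] {d : K}
    (hd₁ : d - 1 ≠ 0) (hd₂ : d - 2 ≠ 0) (j : K) :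
    (j - 1) / ((d - 1) * (d - 2)) + (d - j - 1) / (d - 2) = (d - j) / (d - 1) := by
  field_simp
  ring

theorem key_inequality_general {d j k n q r : ℝ} (hd : 2 < d) (hj : 1 ≤ j) (hk : 1 ≤ k)
    (hn : 0 < n) (hq : 0 < q) (h : (q / n) ^ (d * (d - 2)) * q ≤ r) :
    q ^ ((d - 1) * (j - 1) * (k - 1) / ((d - 2) * (j * k - j + 1)))
        * r ^ ((d - j - 1) * (k - 1) / ((d - 2) * (j * k - j + 1))) ≤
      n ^ (d * (j - 1) * (k - 1) / ((d - 1) * (j * k - j + 1)))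
        * r ^ ((d - j) * (k - 1) / ((d - 1) * (j * k - j + 1))) := by
  have hd₁ : 0 < d - 1 := by linarith
  have hd₂ : 0 < d - 2 := by linarith
  have hsq : d * (d - 2) + 1 = (d - 1) ^ 2 := by ring
  have hr : 0 < r := h.trans_lt' (by positivity)
  have hjk : 0 < j * k - j + 1 := by nlinarith
  have hw : 0 ≤ (k - 1) / (j * k - j + 1) := div_nonneg (by linarith) hjk.le
  have hc : 0 ≤ (j - 1) / ((d - 1) * (d - 2)) * ((k - 1) / (j * k - j + 1)) :=
    mul_nonneg (div_nonneg (by linarith) (by positivity)) hw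
  convert rpow_mul_rpow_le_of_rpow_le_rpow_mul hn.le hq.le hr hc
    ((div_rpow_mul_self_le_iff hn hq).1 h)
    ((d - j - 1) / (d - 2) * ((k - 1) / (j * k - j + 1))) using 3
  · rw [hsq]
    field_simp
  · rw [div_mul_div_comm]
  · field_simp
  · rw [← add_mul, sub_one_div_add_sub_sub_one_div hd₁.ne' hd₂.ne', div_mul_div_comm]

/-- The key elementary inequality in the induction step of the `d`-dimensional
incidence theorem: if `3 ≤ d`, `2 ≤ k`, `2 ≤ j ≤ d-1`, and `0 < q_j ≤ q_{d-1} ≤ n`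
satisfy `q_j ≥ (q_{d-1}/n)^{d(d-2)} q_{d-1}`, then
`q_{d-1}^{(d-1)(j-1)(k-1)/((d-2)(jk-j+1))} q_j^{(d-j-1)(k-1)/((d-2)(jk-j+1))}
  ≤ n^{d(j-1)(k-1)/((d-1)(jk-j+1))} q_j^{(d-j)(k-1)/((d-1)(jk-j+1))}`. -/
theorem key_inequality (d k j : ℕ) (hd : 3 ≤ d) (hk : 2 ≤ k)
    (hj₁ : 2 ≤ j) (hj₂ : j ≤ d - 1)
    (n qd1 qj : ℝ) (hqj : 0 < qj) (h₁ : qj ≤ qd1) (h₂ : qd1 ≤ n)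
    (h13 : (qd1 / n) ^ (d * (d - 2)) * qd1 ≤ qj) :
    qd1 ^ (((d : ℝ) - 1) * ((j : ℝ) - 1) * ((k : ℝ) - 1)
            / (((d : ℝ) - 2) * ((j : ℝ) * (k : ℝ) - (j : ℝ) + 1)))
      * qj ^ (((d : ℝ) - (j : ℝ) - 1) * ((k : ℝ) - 1)
            / (((d : ℝ) - 2) * ((j : ℝ) * (k : ℝ) - (j : ℝ) + 1))) ≤
    n ^ ((d : ℝ) * ((j : ℝ) - 1) * ((k : ℝ) - 1)
            / (((d : ℝ) - 1) * ((j : ℝ) * (k : ℝ) - (j : ℝ) + 1)))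
      * qj ^ (((d : ℝ) - (j : ℝ)) * ((k : ℝ) - 1)
            / (((d : ℝ) - 1) * ((j : ℝ) * (k : ℝ) - (j : ℝ) + 1))) := by
  have hexp : ((d * (d - 2) : ℕ) : ℝ) = (d : ℝ) * ((d : ℝ) - 2) := by
    rw [Nat.cast_mul, Nat.cast_sub (by lia), Nat.cast_ofNat]
  have hq : 0 < qd1 := hqj.trans_le h₁
  rw [← Real.rpow_natCast, hexp] at h13
  exact key_inequality_general (by exact_mod_cast hd) (by exact_mod_cast one_le_two.trans hj₁)
    (by exact_mod_cast one_le_two.trans hk) (hq.trans_le h₂) hq h13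
end
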